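/- arXiv:2110.02654 — 3 statements merged into one kernel-verified Lean document; each statement's English description precedes it below -/
import Mathlib

section
/- Let G be a finite group such that any two different character codegrees of G are coprime. Then G is solvable, |π(G)| ≤ 2, and |cod(G)| ≤ 3. -/
/-!
Suppose that distinct codegrees of `G` are coprime. The hypothesis passes to quotients, because
`cod(G/N) ⊆ cod(G)`, so everything is done by induction on `|G|`.

*Degrees.* If faithful irreducible characters had degrees `a ≠ b`, then the coprimality of `|G|/a`
and `|G|/b` would give `|G| ∣ a b`, contradicting `a² + b² ≤ |G|`. So all faithful irreducible
characters have a common degree `d` and a common codegree `c = |G|/d` (`faithful_finrank_eq`).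

*Element orders.* The order of every element `x` divides a codegree (`exists_orderOf_dvd`). By
induction one may assume that an irreducible character which is faithful on `⟨x⟩` is faithful on
`G`. The character of degree `|G : ⟨x⟩|` induced from a faithful linear character of `⟨x⟩` is then a
sum of faithful characters of degree `d`, so `d` divides `|G|/o(x)`, that is, `o(x) ∣ c`. In
particular every prime divisor of `|G|` divides a codegree.

*Prime powers.* If `G` is solvable, its codegrees are prime powers
(`prime_unique_of_dvd_codSet`): let `N` be an elementary abelian normal `r`-subgroup and `c` a
codegree of `G` but not of `G/N`. A prime divisor of `|G/N|` divides a codegree of `G/N`, hence not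
`c`; so `c` is coprime to `|G/N|` and is a power of `r`.

*Solvability.* In a minimal counterexample there is a least nontrivial normal subgroup `N`, and
`G/N` is solvable. The order of every element of `N` divides the common codegree `c` of the faithful
characters. If `c` is a codegree of `G/N`, it is a prime power, so `N` is a `p`-group. Otherwise `c`
is coprime to `|G/N|`, so `|G/N| ∣ d`; as `d` divides `|G| - |G/N|`, this leads to
`d = |G/N|` and `c = |N|`, and Clifford's theorem (`commutator_le_ker`) shows that `N` is abelian,
because `d` is coprime to `|N|`. Either way `N` is solvable, and so is `G`.

*Two primes.* The elements of the solvable group `G` now have prime power order, and such a group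
has at most two prime divisors (`card_primeFactors_le_two`). This rests on a fixed-point-free action
of a quotient on an elementary abelian normal subgroup and a summation over a coset all of whose
elements have prime order (`pow_card_eq_one_of_fpf`). Finally, the least prime factors of the
codegrees other than `1` are distinct divisors of `|G|`, which bounds `|cod(G)|` by `3`.
-/

open scoped Classical

noncomputable section

namespace Codegree

/-- A function `χ : G → ℂ` is an irreducible complex character of `G` if it is the character
of some simple (irreducible) finite-dimensional complex representation of `G`. -/
def IsIrrChar (G : Type) [Group G] (χ : G → ℂ) : Prop :=
  ∃ V : FDRep ℂ G, CategoryTheory.Simple V ∧ V.character = χ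

/-- The kernel of a character: the set of elements where `χ` takes the value `χ 1`. -/
def charKer {G : Type*} [Group G] (χ : G → ℂ) : Set G := {g | χ g = χ 1}

/-- The degree of a character, as a natural number (`χ 1` is a positive integer). -/
def charDeg {G : Type*} [Group G] (χ : G → ℂ) : ℕ := ⌊(χ 1).re⌋₊

/-- The codegree `|G : Ker χ| / χ(1)` of a character `χ`. -/
def cod {G : Type*} [Group G] (χ : G → ℂ) : ℕ :=
  Nat.card G / (Nat.card (charKer χ) * charDeg χ)

/-- `cod(G)`: the set of codegrees of irreducible characters of `G`. -/
def codSet (G : Type) [Group G] : Set ℕ :=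
  {n | ∃ χ : G → ℂ, IsIrrChar G χ ∧ cod χ = n}

/-- `cod_p(G)`: the set of codegrees of irreducible characters of `G` divisible by `p`. -/
def codSetP (G : Type) [Group G] (p : ℕ) : Set ℕ := {n ∈ codSet G | p ∣ n}

/-- The derived length of a group: the least `n` with `G^(n) = 1`. -/
def derivedLength (G : Type*) [Group G] : ℕ := sInf {n | derivedSeries G n = ⊥}

theorem normal_iSup {G : Type*} [Group G] {ι : Sort*} {f : ι → Subgroup G}
    (h : ∀ i, (f i).Normal) : (⨆ i, f i).Normal := by
  constructor
  intro n hn g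
  refine Subgroup.iSup_induction f (C := fun x => g * x * g⁻¹ ∈ ⨆ i, f i) hn ?_ ?_ ?_
  · intro i x hx
    exact le_iSup f i ((h i).conj_mem x hx g)
  · simpa using (⨆ i, f i).one_mem
  · intro x y hx hy
    have hxy : g * (x * y) * g⁻¹ = (g * x * g⁻¹) * (g * y * g⁻¹) := by group
    rw [hxy]; exact mul_mem hx hy

/-- `O_p(G)`, the largest normal `p`-subgroup of `G`. -/
def pCore (p : ℕ) (G : Type*) [Group G] : Subgroup G :=
  ⨆ H : {H : Subgroup G // H.Normal ∧ IsPGroup p H}, (H : Subgroup G)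

instance pCore_normal (p : ℕ) (G : Type*) [Group G] : (pCore p G).Normal :=
  normal_iSup fun i => i.2.1

/-- `O_{p'}(G)`, the largest normal `p'`-subgroup of `G`. -/
def pPrimeCore (p : ℕ) (G : Type*) [Group G] : Subgroup G :=
  ⨆ H : {H : Subgroup G // H.Normal ∧ Nat.Coprime (Nat.card H) p}, (H : Subgroup G)

instance pPrimeCore_normal (p : ℕ) (G : Type*) [Group G] : (pPrimeCore p G).Normal :=
  normal_iSup fun i => i.2.1

/-- The Fitting subgroup, the largest nilpotent normal subgroup. -/
def fitting (G : Type*) [Group G] : Subgroup G :=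
  ⨆ H : {H : Subgroup G // H.Normal ∧ Group.IsNilpotent H}, (H : Subgroup G)

instance fitting_normal (G : Type*) [Group G] : (fitting G).Normal :=
  normal_iSup fun i => i.2.1

/-- `O_{p',p}(G)`: the preimage in `G` of `O_p(G / O_{p'}(G))`. -/
def pPrimePCore (p : ℕ) (G : Type*) [Group G] : Subgroup G :=
  (pCore p (G ⧸ pPrimeCore p G)).comap (QuotientGroup.mk' (pPrimeCore p G))

/-- `H` is a Frobenius complement in `G`: a proper nontrivial subgroup with
`H ∩ H^g = 1` for all `g ∉ H`. -/
def IsFrobeniusComplement {G : Type*} [Group G] (H : Subgroup G) : Prop :=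
  H ≠ ⊥ ∧ H ≠ ⊤ ∧ ∀ g : G, g ∉ H → H ⊓ H.map (MulAut.conj g).toMonoidHom = ⊥

/-- The Frobenius kernel (as a set): the identity together with the elements not conjugate
to any nonidentity element of `H`. -/
def frobeniusKernelSet {G : Type*} [Group G] (H : Subgroup G) : Set G :=
  {g | g = 1 ∨ ∀ x ∈ H, x ≠ 1 → ¬ IsConj x g}

section

open Module LinearMap Representation

/-! ### Irreducible characters -/

/-- `χ` is the character of an irreducible finite-dimensional complex representation, phrased with
`Representation` instead of the category `FDRep`. -/
def Irr (G : Type) [Group G] (χ : G → ℂ) : Prop :=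
  ∃ (V : Type) (_ : AddCommGroup V) (_ : Module ℂ V) (_ : FiniteDimensional ℂ V)
    (ρ : Representation ℂ G V), ρ.IsIrreducible ∧ ρ.character = χ

/-- The bilinear form `|G|⁻¹ ∑ φ(g) ψ(g⁻¹)` on complex functions on `G`. -/
def ip {G : Type} [Group G] [Fintype G] (φ ψ : G → ℂ) : ℂ :=
  (Nat.card G : ℂ)⁻¹ * ∑ g : G, φ g * ψ g⁻¹

section

variable {G : Type} [Group G]

/-- To be irreducible is to be nonzero and without proper nonzero invariant subspaces. -/
theorem irreducible_iff {V : Type} [AddCommGroup V] [Module ℂ V] (ρ : Representation ℂ G V) :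
    ρ.IsIrreducible ↔ Nontrivial V ∧
      ∀ W : Submodule ℂ V, (∀ g, ∀ v ∈ W, ρ g v ∈ W) → W = ⊥ ∨ W = ⊤ := by
  constructor
  · intro h
    refine ⟨?_, fun W hW => ?_⟩
    · by_contra hn
      rw [not_nontrivial_iff_subsingleton] at hn
      exact bot_ne_top (α := Subrepresentation ρ)
        (Subrepresentation.toSubmodule_injective (Subsingleton.elim _ _))
    · rcases h.eq_bot_or_eq_top (⟨W, hW⟩ : Subrepresentation ρ) with h | h
      · exact Or.inl (congrArg Subrepresentation.toSubmodule h)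
      · exact Or.inr (congrArg Subrepresentation.toSubmodule h)
  · rintro ⟨hn, h⟩
    refine { exists_pair_ne := ⟨⊥, ⊤, fun e => ?_⟩, eq_bot_or_eq_top := fun W => ?_ }
    · exact bot_ne_top (α := Submodule ℂ V) (congrArg Subrepresentation.toSubmodule e)
    · rcases h W.toSubmodule W.apply_mem_toSubmodule with h | h
      · exact Or.inl (Subrepresentation.toSubmodule_injective h)
      · exact Or.inr (Subrepresentation.toSubmodule_injective h)

variable [Fintype G]

theorem ip_irr {χ ψ : G → ℂ} (hχ : Irr G χ) (hψ : Irr G ψ) :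
    ip χ ψ = if χ = ψ then 1 else 0 := by
  have : Invertible (Nat.card G : ℂ) := invertibleOfNonzero (NeZero.ne _)
  have self : ∀ χ : G → ℂ, Irr G χ → ip χ χ = 1 := by
    rintro χ ⟨V, _, _, _, ρ, hρ, rfl⟩
    rw [ip, char_orthonormal, if_pos ⟨Representation.Equiv.refl _⟩]
  split_ifs with h
  · subst h; exact self _ hχ
  · obtain ⟨V, _, _, _, ρ, hρ, rfl⟩ := hχ
    obtain ⟨W, _, _, _, σ, hσ, rfl⟩ := hψ
    rw [ip, char_orthonormal, if_neg]
    rintro ⟨e⟩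
    exact h (char_iso e).symm

omit [Fintype G] in
/-- Every representation of a finite group has a character that is a sum of irreducible ones. -/
theorem exists_decomp [Finite G] (n : ℕ) : ∀ (V : Type) [AddCommGroup V] [Module ℂ V]
    [FiniteDimensional ℂ V] (ρ : Representation ℂ G V), finrank ℂ V = n →
    ∃ s : Multiset (G → ℂ), (∀ χ ∈ s, Irr G χ) ∧ ρ.character = s.sum := by
  induction n using Nat.strong_induction_on with
  | _ n ih =>
  intro V _ _ _ ρ hn
  by_cases hirr : ρ.IsIrreducible
  · exact ⟨{ρ.character}, by simpa using ⟨V, inferInstance, inferInstance, inferInstance, ρ, hirr, rfl⟩, by simp⟩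
  rcases subsingleton_or_nontrivial V with hV | hV
  · refine ⟨0, by simp, ?_⟩
    ext g
    have : ρ g = 0 := Subsingleton.elim _ _
    simp [character, this]
  rw [irreducible_iff] at hirr
  push Not at hirr
  obtain ⟨W, hW, hW0, hW1⟩ := hirr hV
  have : NeZero (Nat.card G : ℂ) := ⟨Nat.cast_ne_zero.mpr Nat.card_pos.ne'⟩
  have hcl : ComplementedLattice (Subrepresentation ρ) :=
    (inferInstance : IsSemisimpleRepresentation ρ)
  let A : Subrepresentation ρ := ⟨W, hW⟩
  obtain ⟨B, hB⟩ := exists_isCompl A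
  have hAB : IsCompl A.toSubmodule B.toSubmodule := by
    rw [isCompl_iff, disjoint_iff, codisjoint_iff] at hB ⊢
    exact ⟨congrArg Subrepresentation.toSubmodule hB.1,
      congrArg Subrepresentation.toSubmodule hB.2⟩
  have hsum := Submodule.finrank_add_eq_of_isCompl hAB
  have hApos : 0 < finrank ℂ A.toSubmodule :=
    Nat.pos_of_ne_zero fun h => hW0 (Submodule.finrank_eq_zero.mp h)
  have hAlt : finrank ℂ A.toSubmodule < finrank ℂ V := Submodule.finrank_lt hW1
  obtain ⟨s, hs, hs'⟩ := ih _ (by omega) A.toSubmodule A.toRepresentation rfl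
  obtain ⟨t, ht, ht'⟩ := ih _ (by omega) B.toSubmodule B.toRepresentation rfl
  refine ⟨s + t, fun χ hχ => ?_, ?_⟩
  · rcases Multiset.mem_add.mp hχ with h | h
    exacts [hs _ h, ht _ h]
  · rw [Multiset.sum_add, ← hs', ← ht']
    ext g
    rw [Pi.add_apply]
    unfold character
    rw [← trace_prodMap', ← trace_conj' _ (Submodule.prodEquivOfIsCompl _ _ hAB)]
    congr 1
    ext v
    obtain ⟨⟨a, b⟩, rfl⟩ := (Submodule.prodEquivOfIsCompl _ _ hAB).surjective v
    rw [LinearEquiv.conj_apply_apply, LinearEquiv.symm_apply_apply]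
    simp [Subrepresentation.toRepresentation]

theorem ip_add_left (a b c : G → ℂ) : ip (a + b) c = ip a c + ip b c := by
  simp [ip, add_mul, Finset.sum_add_distrib, mul_add]

theorem ip_comm (a b : G → ℂ) : ip a b = ip b a := by
  unfold ip
  congr 1
  refine Fintype.sum_equiv (Equiv.inv G) _ _ fun g => ?_
  simp [mul_comm]

theorem ip_sum (s : Multiset (G → ℂ)) (hs : ∀ χ ∈ s, Irr G χ) {ψ : G → ℂ} (hψ : Irr G ψ) :
    ip s.sum ψ = s.count ψ := by
  induction s using Multiset.induction_on with
  | empty => simp [ip]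
  | cons a s ih =>
    rw [Multiset.sum_cons, ip_add_left, ih fun χ hχ => hs χ (Multiset.mem_cons_of_mem hχ),
      ip_irr (hs a (Multiset.mem_cons_self a s)) hψ, Multiset.count_cons]
    by_cases h : a = ψ
    · subst h; simp [add_comm]
    · rw [if_neg h, if_neg (Ne.symm h)]; simp

theorem card_le_ip_self (s : Multiset (G → ℂ)) (hs : ∀ χ ∈ s, Irr G χ) :
    ∃ m : ℕ, ip s.sum s.sum = m ∧ s.card ≤ m := by
  have key : ∀ t : Multiset (G → ℂ), t ≤ s →
      ∃ m : ℕ, ip t.sum s.sum = m ∧ t.card ≤ m := by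
    intro t
    induction t using Multiset.induction_on with
    | empty => intro _; exact ⟨0, by simp [ip], by simp⟩
    | cons a t ih =>
      intro hts
      obtain ⟨m, hm, hm'⟩ := ih ((Multiset.le_cons_self t a).trans hts)
      have ha : a ∈ s := Multiset.mem_of_le hts (Multiset.mem_cons_self a t)
      refine ⟨s.count a + m, ?_, ?_⟩
      · rw [Multiset.sum_cons, ip_add_left, hm, ip_comm, ip_sum s hs (hs a ha)]
        push_cast; rfl
      · rw [Multiset.card_cons]
        have := Multiset.count_pos.mpr ha
        omega
  exact key s le_rfl

omit [Fintype G] in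
theorem isIrrChar_iff [Finite G] {χ : G → ℂ} : IsIrrChar G χ ↔ Irr G χ := by
  have := Fintype.ofFinite G
  constructor
  · rintro ⟨V, hV, rfl⟩
    have h1 := (FDRep.simple_iff_char_is_norm_one V).mp hV
    obtain ⟨s, hs, hs'⟩ := exists_decomp (G := G) _ V V.ρ rfl
    have hVs : V.character = s.sum := hs'
    obtain ⟨m, hm, hsm⟩ := card_le_ip_self s hs
    have hm1 : m = 1 := by
      have : (m : ℂ) = 1 := by
        rw [← hm, ← hVs, ip, h1, inv_mul_cancel₀ (NeZero.ne _)]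
      exact_mod_cast this
    have hs1 : s.card ≠ 0 := by
      intro h0
      rw [Multiset.card_eq_zero] at h0
      subst h0
      simp [ip, hm1] at hm
    obtain ⟨a, rfl⟩ := Multiset.card_eq_one.mp (by omega : s.card = 1)
    rw [hVs]
    simpa using hs
  · rintro ⟨V, _, _, _, ρ, hρ, rfl⟩
    refine ⟨FDRep.of ρ, ?_, rfl⟩
    rw [FDRep.simple_iff_char_is_norm_one]
    have hI : Irr G ρ.character :=
      ⟨V, inferInstance, inferInstance, inferInstance, ρ, hρ, rfl⟩
    have h := ip_irr (G := G) hI hI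
    rw [if_pos rfl, ip, inv_mul_eq_one₀ (NeZero.ne _)] at h
    exact h.symm

omit [Fintype G] in
/-- The right regular representation, on the functions on `G`. -/
def reg (G : Type) [Group G] : Representation ℂ G (G → ℂ) where
  toFun g := LinearMap.funLeft ℂ ℂ (fun h => h * g)
  map_one' := by ext; simp [LinearMap.funLeft_apply]
  map_mul' a b := by
    refine LinearMap.ext fun f => funext fun h => ?_
    simp [LinearMap.funLeft_apply, mul_assoc]

theorem reg_character (g : G) : (reg G).character g = if g = 1 then (Nat.card G : ℂ) else 0 := by
  rw [character, LinearMap.trace_eq_matrix_trace ℂ (Pi.basisFun ℂ G), Matrix.trace]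
  have : ∀ h : G, (LinearMap.toMatrix (Pi.basisFun ℂ G) (Pi.basisFun ℂ G) (reg G g)).diag h =
      if g = 1 then 1 else 0 := by
    intro h
    simp [Matrix.diag, reg, LinearMap.funLeft_apply, Pi.single_apply]
  simp only [this]
  split_ifs <;> simp

omit [Fintype G] in
theorem Irr.exists_finrank {χ : G → ℂ} (h : Irr G χ) : ∃ d : ℕ, 0 < d ∧ χ 1 = d := by
  obtain ⟨V, _, _, _, ρ, hρ, rfl⟩ := h
  have := ((irreducible_iff ρ).mp hρ).1
  exact ⟨finrank ℂ V, finrank_pos, char_one ρ⟩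

omit [Fintype G] in
/-- There are finitely many irreducible characters, and `∑ χ(1) χ` is the regular character. -/
theorem exists_irr_finset (G : Type) [Group G] [Finite G] : ∃ S : Finset (G → ℂ),
    (∀ χ, χ ∈ S ↔ Irr G χ) ∧
    ∀ g : G, ∑ χ ∈ S, χ 1 * χ g = if g = 1 then (Nat.card G : ℂ) else 0 := by
  have := Fintype.ofFinite G
  obtain ⟨s, hs, hs'⟩ := exists_decomp (G := G) _ _ (reg G) rfl
  have hcount : ∀ χ, Irr G χ → χ 1 = s.count χ := by
    intro χ hχ
    rw [← ip_sum s hs hχ, ← hs', ip]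
    simp only [reg_character, ite_mul, zero_mul, Finset.sum_ite_eq', Finset.mem_univ, if_true,
      inv_one]
    rw [inv_mul_cancel_left₀ (NeZero.ne _)]
  refine ⟨s.toFinset, fun χ => ⟨fun h => hs χ (Multiset.mem_toFinset.mp h), fun h => ?_⟩, ?_⟩
  · rw [Multiset.mem_toFinset, ← Multiset.count_pos]
    obtain ⟨d, hd, hd'⟩ := h.exists_finrank
    have : (d : ℂ) = s.count χ := hd' ▸ hcount χ h
    have : d = s.count χ := by exact_mod_cast this
    omega
  · intro g
    rw [← reg_character, hs', Finset.sum_multiset_count, Finset.sum_apply]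
    refine Finset.sum_congr rfl fun χ hχ => ?_
    rw [hcount χ (hs χ (Multiset.mem_toFinset.mp hχ))]
    simp

end

/-! ### Degrees, kernels and codegrees -/

section

variable {V : Type} [AddCommGroup V] [Module ℂ V] [FiniteDimensional ℂ V]

theorem pow_eq_one_of_mem_roots {f : End ℂ V} {m : ℕ} (hf : f ^ m = 1) {μ : ℂ}
    (hμ : μ ∈ (LinearMap.charpoly f).roots) : μ ^ m = 1 := by
  have h1 : f.HasEigenvalue μ := (End.hasEigenvalue_iff_isRoot_charpoly f μ).mpr
    (Polynomial.isRoot_of_mem_roots hμ)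
  have h2 := h1.pow m
  rw [hf] at h2
  obtain ⟨v, hv⟩ := h2.exists_hasEigenvector
  have h3 := hv.apply_eq_smul
  have h4 : (μ ^ m - 1) • v = 0 := by
    rw [sub_smul, ← h3]; simp
  rcases smul_eq_zero.mp h4 with h | h
  · exact sub_eq_zero.mp h
  · exact absurd h hv.2

theorem re_sum_le_card (s : Multiset ℂ) (hs : ∀ μ ∈ s, ‖μ‖ = 1) :
    s.sum.re ≤ s.card ∧ (s.sum.re = s.card → ∀ μ ∈ s, μ = 1) := by
  induction s using Multiset.induction_on with
  | empty => simp
  | cons a s ih =>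
    obtain ⟨h1, h2⟩ := ih fun μ hμ => hs μ (Multiset.mem_cons_of_mem hμ)
    have ha := hs a (Multiset.mem_cons_self a s)
    have ha' : a.re ≤ 1 := ha ▸ Complex.re_le_norm a
    rw [Multiset.sum_cons, Complex.add_re, Multiset.card_cons]
    push_cast
    refine ⟨by linarith, fun h => ?_⟩
    intro μ hμ
    rcases Multiset.mem_cons.mp hμ with rfl | hμ
    · have hre : μ.re = 1 := by linarith
      have him : μ.im = 0 := by
        have h3 := Complex.sq_norm μ
        rw [ha, Complex.normSq_apply, hre] at h3
        nlinarith
      exact Complex.ext (by simpa using hre) (by simpa using him)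
    · exact h2 (by linarith) μ hμ

/-- An operator of finite order whose trace equals the dimension is the identity. -/
theorem eq_one_of_trace_eq {f : End ℂ V} {m : ℕ} (hm : m ≠ 0) (hf : f ^ m = 1)
    (ht : LinearMap.trace ℂ V f = finrank ℂ V) : f = 1 := by
  have hsp : (LinearMap.charpoly f).Splits := IsAlgClosed.splits _
  have hcard : (LinearMap.charpoly f).roots.card = finrank ℂ V := by
    rw [Polynomial.splits_iff_card_roots.mp hsp, LinearMap.charpoly_natDegree]
  have h1 : ∀ μ ∈ (LinearMap.charpoly f).roots, μ = 1 := by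
    refine (re_sum_le_card _ fun μ hμ => ?_).2 ?_
    · exact Complex.norm_eq_one_of_pow_eq_one (pow_eq_one_of_mem_roots hf hμ) hm
    · rw [← End.trace_eq_sum_roots_charpoly_of_splits hsp, ht, hcard]; simp
  have h2 : LinearMap.charpoly f = (Polynomial.X - Polynomial.C 1) ^ finrank ℂ V := by
    conv_lhs => rw [hsp.eq_prod_roots, (Multiset.eq_replicate.mpr ⟨hcard, h1⟩)]
    rw [(LinearMap.charpoly_monic f).leadingCoeff]
    simp
  have hnil : IsNilpotent (f - algebraMap ℂ (End ℂ V) 1) := by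
    refine ⟨finrank ℂ V, ?_⟩
    have := LinearMap.aeval_self_charpoly f
    rw [h2] at this
    simpa using this
  have hss : f.IsSemisimple := by
    refine End.isSemisimple_of_squarefree_aeval_eq_zero (p := Polynomial.X ^ m - 1)
      (Polynomial.Separable.squarefree ?_) (by simp [hf])
    rw [Polynomial.X_pow_sub_one_separable_iff]
    exact_mod_cast hm
  have := End.eq_zero_of_isNilpotent_isSemisimple hnil (End.isSemisimple_sub_algebraMap_iff.mpr hss)
  rw [sub_eq_zero] at this
  simpa using this

theorem isIntegral_trace_of_pow_eq_one {f : End ℂ V} {m : ℕ} (hm : m ≠ 0) (hf : f ^ m = 1) :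
    IsIntegral ℤ (LinearMap.trace ℂ V f) := by
  rw [End.trace_eq_sum_roots_charpoly_of_splits (IsAlgClosed.splits _)]
  refine IsIntegral.multiset_sum fun μ hμ => ?_
  refine IsIntegral.of_pow (Nat.pos_of_ne_zero hm) ?_
  rw [pow_eq_one_of_mem_roots hf hμ]
  exact isIntegral_one

variable {G : Type} [Group G] [Finite G] (ρ : Representation ℂ G V)

omit [FiniteDimensional ℂ V] [Finite G] in
theorem rho_pow_card (g : G) : ρ g ^ Nat.card G = 1 := by
  rw [← map_pow, pow_card_eq_one', map_one]

theorem charKer_eq : charKer ρ.character = (MonoidHom.ker ρ : Set G) := by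
  ext g
  simp only [charKer, Set.mem_ofPred_eq, SetLike.mem_coe, MonoidHom.mem_ker]
  rw [char_one]
  constructor
  · exact eq_one_of_trace_eq Nat.card_pos.ne' (rho_pow_card ρ g)
  · intro h
    rw [← char_one ρ, character, character, h, map_one ρ]

/-- The degree of an irreducible representation of a finite group divides the group order. -/
theorem finrank_dvd_card (hρ : ρ.IsIrreducible) : finrank ℂ V ∣ Nat.card G := by
  have := Fintype.ofFinite G
  have hinv : Invertible (Nat.card G : ℂ) := invertibleOfNonzero (NeZero.ne _)
  have hV := ((irreducible_iff ρ).mp hρ).1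
  have hd : 0 < finrank ℂ V := finrank_pos
  have hint : ∀ g, IsIntegral ℤ (ρ.character g) := fun g =>
    isIntegral_trace_of_pow_eq_one Nat.card_pos.ne' (rho_pow_card ρ g)
  let O := integralClosure ℤ ℂ
  let a : G → O := fun g => ⟨ρ.character g⁻¹, hint g⁻¹⟩
  let t : MonoidAlgebra O G := ∑ g, MonoidAlgebra.single g (a g)
  let φ : MonoidAlgebra O G →ₐ[O] End ℂ V := MonoidAlgebra.lift O (End ℂ V) G ρ
  let T : End ℂ V := ∑ g, ρ.character g⁻¹ • ρ g
  have hφt : φ t = T := by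
    simp only [φ, t, T, map_sum]
    refine Finset.sum_congr rfl fun g _ => ?_
    rw [MonoidAlgebra.lift_single]
    rfl
  have hT : IsIntegral O T := hφt ▸ (IsIntegral.of_finite O t).map φ
  have hcomm : ∀ h, T ∘ₗ ρ h = ρ h ∘ₗ T := by
    intro h
    change T * ρ h = ρ h * T
    simp only [T, Finset.sum_mul, Finset.mul_sum]
    refine Fintype.sum_equiv (MulAut.conj h⁻¹).toEquiv _ _ fun g => ?_
    have h1 : ρ.character ((MulAut.conj h⁻¹ g)⁻¹) = ρ.character g⁻¹ := by
      rw [← map_inv]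
      simpa using char_conj ρ g⁻¹ h⁻¹
    change _ = ρ h * (ρ.character ((MulAut.conj h⁻¹ g)⁻¹) • ρ (MulAut.conj h⁻¹ g))
    rw [h1, mul_smul_comm, smul_mul_assoc, ← map_mul, ← map_mul]
    congr 2
    simp [mul_assoc]
  let T' : IntertwiningMap ρ ρ := ⟨T, fun h => by exact hcomm h⟩
  obtain ⟨c, hc⟩ :=
    (IsIrreducible.algebraMap_intertwiningMap_bijective_of_isAlgClosed (ρ := ρ)).2 T'
  have hTc : T = algebraMap ℂ (End ℂ V) c := by
    have := congrArg IntertwiningMap.toLinearMap hc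
    exact this.symm
  have htr : c * finrank ℂ V = Nat.card G := by
    have h1 : LinearMap.trace ℂ V T = c * finrank ℂ V := by
      rw [hTc, Algebra.algebraMap_eq_smul_one, map_smul, LinearMap.trace_one, smul_eq_mul]
    have h2 : LinearMap.trace ℂ V T = ∑ g, ρ.character g * ρ.character g⁻¹ := by
      simp only [T, map_sum, map_smul, smul_eq_mul]
      exact Finset.sum_congr rfl fun g _ => mul_comm _ _
    have h3 := char_orthonormal ρ ρ
    rw [if_pos ⟨Representation.Equiv.refl _⟩, inv_mul_eq_one₀ (NeZero.ne _)] at h3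
    rw [← h1, h2, h3]
  have hcO : IsIntegral O c := by
    rw [hTc] at hT
    exact (isIntegral_algebraMap_iff (FaithfulSMul.algebraMap_injective ℂ (End ℂ V))).mp hT
  have hcZ : IsIntegral ℤ c := isIntegral_trans c hcO
  have hcq : c = algebraMap ℚ ℂ ((Nat.card G : ℚ) / finrank ℂ V) := by
    have : (finrank ℂ V : ℂ) ≠ 0 := by exact_mod_cast hd.ne'
    rw [map_div₀, map_natCast, map_natCast, eq_div_iff this, htr]
  rw [hcq, isIntegral_algebraMap_iff (algebraMap ℚ ℂ).injective,
    IsIntegrallyClosed.isIntegral_iff] at hcZ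
  obtain ⟨y, hy⟩ := hcZ
  have hd' : (finrank ℂ V : ℚ) ≠ 0 := by exact_mod_cast hd.ne'
  rw [eq_div_iff hd'] at hy
  have hy' : y * (finrank ℂ V : ℤ) = Nat.card G := by
    have hy2 : ((y * (finrank ℂ V : ℤ) : ℤ) : ℚ) = ((Nat.card G : ℤ) : ℚ) := by
      push_cast; simpa using hy
    exact_mod_cast hy2
  exact Int.natCast_dvd_natCast.mp ⟨y, by rw [← hy', mul_comm]⟩

end

section

variable {G : Type} [Group G] {V : Type} [AddCommGroup V] [Module ℂ V]

/-- The representation of `G ⧸ N` induced by a representation of `G` with `N` in its kernel. -/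
def descend (ρ : Representation ℂ G V) (N : Subgroup G) [N.Normal] (hN : N ≤ MonoidHom.ker ρ) :
    Representation ℂ (G ⧸ N) V :=
  QuotientGroup.lift N ρ hN

theorem descend_irreducible {ρ : Representation ℂ G V} (hρ : ρ.IsIrreducible) (N : Subgroup G)
    [N.Normal] (hN : N ≤ MonoidHom.ker ρ) : (descend ρ N hN).IsIrreducible := by
  rw [irreducible_iff] at hρ ⊢
  exact ⟨hρ.1, fun W hW => hρ.2 W fun g v hv => hW (g : G ⧸ N) v hv⟩

theorem comp_irreducible {H : Type} [Group H] {ρ : Representation ℂ H V} (hρ : ρ.IsIrreducible)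
    {f : G →* H} (hf : Function.Surjective f) :
    IsIrreducible (MonoidHom.comp ρ f : Representation ℂ G V) := by
  rw [irreducible_iff] at hρ ⊢
  refine ⟨hρ.1, fun W hW => hρ.2 W fun g v hv => ?_⟩
  obtain ⟨g, rfl⟩ := hf g
  exact hW g v hv

theorem finrank_dvd_index [FiniteDimensional ℂ V] [Finite G] {ρ : Representation ℂ G V}
    (hρ : ρ.IsIrreducible) : finrank ℂ V ∣ (MonoidHom.ker ρ).index :=
  finrank_dvd_card _ (descend_irreducible hρ (MonoidHom.ker ρ) le_rfl)

/-- The natural-number division in `cod` is exact: the degree divides `|G : Ker χ|`. -/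
theorem mem_codSet_iff [Finite G] {c : ℕ} : c ∈ codSet G ↔
    ∃ (V : Type) (_ : AddCommGroup V) (_ : Module ℂ V) (_ : FiniteDimensional ℂ V)
      (ρ : Representation ℂ G V), ρ.IsIrreducible ∧
        c * finrank ℂ V = (MonoidHom.ker ρ).index := by
  have key : ∀ (V : Type) [AddCommGroup V] [Module ℂ V] [FiniteDimensional ℂ V]
      (ρ : Representation ℂ G V), ρ.IsIrreducible →
      cod ρ.character * finrank ℂ V = (MonoidHom.ker ρ).index := by
    intro V _ _ _ ρ hρ
    have h1 : charDeg ρ.character = finrank ℂ V := by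
      rw [charDeg, char_one]; simp
    have h2 : Nat.card (charKer ρ.character) = Nat.card (MonoidHom.ker ρ) := by
      rw [charKer_eq]; rfl
    have h3 := Subgroup.card_mul_index (MonoidHom.ker ρ)
    rw [cod, h1, h2, ← Nat.div_div_eq_div_mul, ← h3, Nat.mul_div_cancel_left _ Nat.card_pos]
    exact Nat.div_mul_cancel (finrank_dvd_index hρ)
  constructor
  · rintro ⟨χ, hχ, rfl⟩
    obtain ⟨V, _, _, _, ρ, hρ, rfl⟩ := isIrrChar_iff.mp hχ
    exact ⟨V, inferInstance, inferInstance, inferInstance, ρ, hρ, key V ρ hρ⟩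
  · rintro ⟨V, _, _, _, ρ, hρ, h⟩
    refine ⟨ρ.character, isIrrChar_iff.mpr
      ⟨V, inferInstance, inferInstance, inferInstance, ρ, hρ, rfl⟩, ?_⟩
    have := ((irreducible_iff ρ).mp hρ).1
    exact Nat.eq_of_mul_eq_mul_right (finrank_pos (R := ℂ) (M := V)) ((key V ρ hρ).trans h.symm)

theorem codSet_dvd_card [Finite G] {c : ℕ} (hc : c ∈ codSet G) : c ∣ Nat.card G := by
  obtain ⟨V, _, _, _, ρ, hρ, h⟩ := mem_codSet_iff.mp hc
  exact (Dvd.intro _ h).trans (Subgroup.index_dvd_card _)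

theorem codSet_subset_of_surjective [Finite G] {H : Type} [Group H] [Finite H] {f : G →* H}
    (hf : Function.Surjective f) : codSet H ⊆ codSet G := by
  intro c hc
  obtain ⟨V, _, _, _, ρ, hρ, h⟩ := mem_codSet_iff.mp hc
  refine mem_codSet_iff.mpr ⟨V, inferInstance, inferInstance, inferInstance, _,
    comp_irreducible hρ hf, ?_⟩
  rw [h, ← Subgroup.index_comap_of_surjective _ hf]
  rfl

theorem codSet_quotient_subset [Finite G] (N : Subgroup G) [N.Normal] :
    codSet (G ⧸ N) ⊆ codSet G :=
  codSet_subset_of_surjective (QuotientGroup.mk'_surjective N)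

end

/-! ### Multiplicities and element orders -/

section

/-- The finite set of irreducible characters of `G`. -/
def irr (G : Type) [Group G] [Finite G] : Finset (G → ℂ) := (exists_irr_finset G).choose

variable {G : Type} [Group G]

/-- The space of vectors on which the subgroup `A` acts through the linear character `l`. -/
def eig {V : Type} [AddCommGroup V] [Module ℂ V] (ρ : Representation ℂ G V) (A : Subgroup G)
    (l : A →* ℂˣ) : Submodule ℂ V where
  carrier := {v | ∀ a : A, ρ a v = (l a : ℂ) • v}
  add_mem' {u v} hu hv a := by rw [map_add, hu a, hv a, smul_add]
  zero_mem' a := by simp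
  smul_mem' c v hv a := by rw [map_smul, hv a, smul_comm]

theorem mem_eig {V : Type} [AddCommGroup V] [Module ℂ V] {ρ : Representation ℂ G V}
    {A : Subgroup G} {l : A →* ℂˣ} {v : V} :
    v ∈ eig ρ A l ↔ ∀ a : A, ρ a v = (l a : ℂ) • v := Iff.rfl

variable [Finite G]

theorem mem_irr {χ : G → ℂ} : χ ∈ irr G ↔ Irr G χ := (exists_irr_finset G).choose_spec.1 χ

theorem sum_irr (g : G) : ∑ χ ∈ irr G, χ 1 * χ g = if g = 1 then (Nat.card G : ℂ) else 0 :=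
  (exists_irr_finset G).choose_spec.2 g

/-- The multiplicity `|A|⁻¹ ∑ l(a)⁻¹ χ(a)` of the linear character `l` of `A` in `χ`. It is a
natural number when `χ` is a character, which is why taking the floor loses nothing. -/
def mult (A : Subgroup G) (l : A →* ℂˣ) (χ : G → ℂ) : ℕ :=
  have := Fintype.ofFinite A
  ⌊((Nat.card A : ℂ)⁻¹ * ∑ a : A, (((l a)⁻¹ : ℂˣ) : ℂ) * χ a).re⌋₊

/-- The multiplicity is the dimension of the eigenspace, as one sees by twisting the restriction to
`A` with `l⁻¹` and counting fixed points. -/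
theorem mult_aux {V : Type} [AddCommGroup V] [Module ℂ V] [FiniteDimensional ℂ V]
    (ρ : Representation ℂ G V) (A : Subgroup G) [Fintype A] (l : A →* ℂˣ) :
    (Nat.card A : ℂ)⁻¹ * ∑ a : A, (((l a)⁻¹ : ℂˣ) : ℂ) * ρ.character a =
      finrank ℂ (eig ρ A l) := by
  let τ : Representation ℂ A V :=
    { toFun := fun a => (((l a)⁻¹ : ℂˣ) : ℂ) • ρ a
      map_one' := by simp
      map_mul' := fun a b => by
        rw [map_mul, mul_inv, Subgroup.coe_mul, map_mul, Units.val_mul, smul_mul_smul_comm] }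
  have hinv : Invertible (Nat.card A : ℂ) := invertibleOfNonzero (NeZero.ne _)
  have h1 := card_inv_mul_sum_char_eq_finrank τ
  have h2 : τ.invariants = eig ρ A l := by
    ext v
    rw [mem_invariants, mem_eig]
    refine forall_congr' fun a => ?_
    change (((l a)⁻¹ : ℂˣ) : ℂ) • ρ a v = v ↔ _
    rw [← Units.smul_def, inv_smul_eq_iff, Units.smul_def]
  rw [h2] at h1
  rw [← h1]
  congr 1
  refine Finset.sum_congr rfl fun a _ => ?_
  change _ = LinearMap.trace ℂ V ((((l a)⁻¹ : ℂˣ) : ℂ) • ρ a)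
  rw [map_smul]
  rfl

theorem mult_character {V : Type} [AddCommGroup V] [Module ℂ V] [FiniteDimensional ℂ V]
    (ρ : Representation ℂ G V) (A : Subgroup G) (l : A →* ℂˣ) :
    mult A l ρ.character = finrank ℂ (eig ρ A l) := by
  rw [mult, mult_aux, Complex.natCast_re, Nat.floor_natCast]

omit [Finite G] in
theorem charDeg_character {V : Type} [AddCommGroup V] [Module ℂ V] [FiniteDimensional ℂ V]
    (ρ : Representation ℂ G V) : charDeg ρ.character = finrank ℂ V := by
  rw [charDeg, char_one]; simp

/-- Frobenius reciprocity for the character of degree `|G : A|` induced from `l`. -/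
theorem sum_charDeg_mul_mult (A : Subgroup G) (l : A →* ℂˣ) :
    ∑ χ ∈ irr G, charDeg χ * mult A l χ = A.index := by
  have := Fintype.ofFinite A
  have h1 : ∀ χ ∈ irr G, ((charDeg χ * mult A l χ : ℕ) : ℂ) =
      (Nat.card A : ℂ)⁻¹ * ∑ a : A, (((l a)⁻¹ : ℂˣ) : ℂ) * (χ 1 * χ a) := by
    intro χ hχ
    obtain ⟨V, _, _, _, ρ, hρ, rfl⟩ := mem_irr.mp hχ
    rw [Nat.cast_mul, mult_character, ← mult_aux, charDeg_character, char_one, mul_left_comm, Finset.mul_sum]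
    congr 1
    exact Finset.sum_congr rfl fun a _ => mul_left_comm _ _ _
  have h2 : ((∑ χ ∈ irr G, charDeg χ * mult A l χ : ℕ) : ℂ) = A.index := by
    rw [Nat.cast_sum, Finset.sum_congr rfl h1, ← Finset.mul_sum, Finset.sum_comm]
    simp only [← Finset.mul_sum, sum_irr]
    rw [Finset.sum_eq_single (1 : A)]
    · rw [← Subgroup.card_mul_index A]
      simp
    · intro b _ hb
      rw [if_neg (by simpa using hb), mul_zero]
    · simp
  exact_mod_cast h2

omit [Finite G] in
/-- The fixed points of a normal subgroup form an invariant subspace. -/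
theorem eig_one_eq {V : Type} [AddCommGroup V] [Module ℂ V] {ρ : Representation ℂ G V}
    (hρ : ρ.IsIrreducible) (N : Subgroup G) [N.Normal] :
    eig ρ N 1 = if N ≤ MonoidHom.ker ρ then ⊤ else ⊥ := by
  split_ifs with h
  · rw [eq_top_iff]
    intro v _
    rw [mem_eig]
    intro a
    have : ρ a = 1 := h a.2
    simp [this]
  · refine (((irreducible_iff ρ).mp hρ).2 (eig ρ N 1) fun g v hv => ?_).resolve_right fun ht => h ?_
    · rw [mem_eig] at hv ⊢
      intro a
      have h1 := hv ⟨g⁻¹ * a * g, by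
        simpa using (inferInstance : N.Normal).conj_mem a a.2 g⁻¹⟩
      have h2 : (a : G) * g = g * (g⁻¹ * a * g) := by group
      rw [← Module.End.mul_apply, ← map_mul, h2, map_mul, Module.End.mul_apply, h1]
      simp
    · intro a ha
      rw [MonoidHom.mem_ker]
      ext v
      have h1 : v ∈ eig ρ N 1 := ht ▸ Submodule.mem_top
      simpa using h1 ⟨a, ha⟩

theorem mult_one_character {V : Type} [AddCommGroup V] [Module ℂ V] [FiniteDimensional ℂ V]
    {ρ : Representation ℂ G V} (hρ : ρ.IsIrreducible) (N : Subgroup G) [N.Normal] :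
    mult N 1 ρ.character = if N ≤ MonoidHom.ker ρ then finrank ℂ V else 0 := by
  rw [mult_character, eig_one_eq hρ]
  by_cases h : N ≤ MonoidHom.ker ρ
  · rw [if_pos h, if_pos h, finrank_top]
  · rw [if_neg h, if_neg h, finrank_bot]

theorem sum_charDeg_sq : ∑ χ ∈ irr G, charDeg χ * charDeg χ = Nat.card G := by
  rw [← Subgroup.index_bot, ← sum_charDeg_mul_mult ⊥ 1]
  refine Finset.sum_congr rfl fun χ hχ => ?_
  obtain ⟨V, _, _, _, ρ, hρ, rfl⟩ := mem_irr.mp hχ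
  rw [mult_one_character hρ, if_pos bot_le, charDeg_character]

/-- Under the coprimality hypothesis all faithful irreducible characters have the same degree: two
different degrees `a ≠ b` would give `|G| ∣ a * b`, whereas `a² + b² ≤ |G|`. -/
theorem faithful_finrank_eq (H : (codSet G).Pairwise Nat.Coprime)
    {V : Type} [AddCommGroup V] [Module ℂ V] [FiniteDimensional ℂ V]
    {W : Type} [AddCommGroup W] [Module ℂ W] [FiniteDimensional ℂ W]
    {ρ : Representation ℂ G V} {σ : Representation ℂ G W} (hρ : ρ.IsIrreducible)
    (hσ : σ.IsIrreducible) (kρ : MonoidHom.ker ρ = ⊥) (kσ : MonoidHom.ker σ = ⊥) :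
    finrank ℂ V = finrank ℂ W := by
  by_contra hne
  have hV := ((irreducible_iff ρ).mp hρ).1
  have ha : 0 < finrank ℂ V := finrank_pos
  obtain ⟨c, hc⟩ := finrank_dvd_index hρ
  obtain ⟨e, he⟩ := finrank_dvd_index hσ
  have hcm : c ∈ codSet G := mem_codSet_iff.mpr
    ⟨V, inferInstance, inferInstance, inferInstance, ρ, hρ, by rw [hc, mul_comm]⟩
  have hem : e ∈ codSet G := mem_codSet_iff.mpr
    ⟨W, inferInstance, inferInstance, inferInstance, σ, hσ, by rw [he, mul_comm]⟩
  rw [kρ, Subgroup.index_bot] at hc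
  rw [kσ, Subgroup.index_bot] at he
  have hpos : 0 < Nat.card G := Nat.card_pos
  have hce : c ≠ e := by
    rintro rfl
    have hc0 : 0 < c := Nat.pos_of_ne_zero fun h => by rw [h, mul_zero] at hc; omega
    exact hne (Nat.eq_of_mul_eq_mul_right hc0 (hc.symm.trans he))
  have hdvd : c * e ∣ Nat.card G :=
    (H hcm hem hce).mul_dvd_of_dvd_of_dvd (codSet_dvd_card hcm) (codSet_dvd_card hem)
  have hle := Nat.le_of_dvd hpos hdvd
  have hprod : Nat.card G ≤ finrank ℂ V * finrank ℂ W := by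
    by_contra hlt
    push Not at hlt
    have h1 : Nat.card G * Nat.card G = (finrank ℂ V * finrank ℂ W) * (c * e) := by
      conv_lhs => lhs; rw [hc]
      rw [he]; ring
    have h2 : (finrank ℂ V * finrank ℂ W) * (c * e) < Nat.card G * Nat.card G :=
      (Nat.mul_le_mul_left _ hle).trans_lt (Nat.mul_lt_mul_of_pos_right hlt hpos)
    omega
  have hsq : finrank ℂ V * finrank ℂ V + finrank ℂ W * finrank ℂ W ≤ Nat.card G := by
    have hχ : ρ.character ∈ irr G := mem_irr.mpr
      ⟨V, inferInstance, inferInstance, inferInstance, ρ, hρ, rfl⟩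
    have hψ : σ.character ∈ irr G := mem_irr.mpr
      ⟨W, inferInstance, inferInstance, inferInstance, σ, hσ, rfl⟩
    have hχψ : ρ.character ≠ σ.character := by
      intro h
      have := charDeg_character ρ
      rw [h, charDeg_character] at this
      exact hne this.symm
    rw [← sum_charDeg_sq (G := G), ← charDeg_character ρ, ← charDeg_character σ,
      ← Finset.sum_pair (f := fun χ => charDeg χ * charDeg χ) hχψ]
    refine Finset.sum_le_sum_of_subset ?_
    intro χ hχ'
    rcases Finset.mem_insert.mp hχ' with rfl | h
    · exact hχ
    · rw [Finset.mem_singleton.mp h]; exact hψ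
  rcases lt_or_gt_of_ne hne with h | h <;> nlinarith

/-- A finite cyclic group has a faithful linear character. -/
theorem exists_faithful_char (x : G) :
    ∃ l : Subgroup.zpowers x →* ℂˣ, Function.Injective l := by
  obtain ⟨n, hn⟩ : ∃ n, n = Nat.card (Subgroup.zpowers x) := ⟨_, rfl⟩
  have : NeZero n := ⟨hn ▸ Nat.card_pos.ne'⟩
  have hcard : Nat.card (Subgroup.zpowers x) = Nat.card (rootsOfUnity n ℂ) := by
    rw [Complex.card_rootsOfUnity, hn]
  let e := mulEquivOfCyclicCardEq hcard
  exact ⟨(rootsOfUnity n ℂ).subtype.comp e.toMonoidHom,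
    (Subgroup.subtype_injective _).comp e.injective⟩

/-- If all irreducible characters that are faithful on `⟨x⟩` are faithful on `G`, the character
induced from a faithful linear character of `⟨x⟩` is a sum of faithful characters of equal degree,
so that the order of `x` divides a codegree. -/
theorem orderOf_dvd_of_faithful (H : (codSet G).Pairwise Nat.Coprime) (x : G)
    (hx : ∀ (V : Type) [AddCommGroup V] [Module ℂ V] [FiniteDimensional ℂ V]
      (ρ : Representation ℂ G V), ρ.IsIrreducible →
      MonoidHom.ker ρ ⊓ Subgroup.zpowers x = ⊥ → MonoidHom.ker ρ = ⊥) :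
    ∃ (V : Type) (_ : AddCommGroup V) (_ : Module ℂ V) (_ : FiniteDimensional ℂ V)
      (ρ : Representation ℂ G V) (c : ℕ), ρ.IsIrreducible ∧ MonoidHom.ker ρ = ⊥ ∧
        c ∈ codSet G ∧ c * finrank ℂ V = Nat.card G ∧ orderOf x ∣ c := by
  obtain ⟨l, hl⟩ := exists_faithful_char x
  have hmult : ∀ (V : Type) [AddCommGroup V] [Module ℂ V] [FiniteDimensional ℂ V]
      (ρ : Representation ℂ G V), ρ.IsIrreducible →
      mult (Subgroup.zpowers x) l ρ.character ≠ 0 → MonoidHom.ker ρ = ⊥ := by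
    intro V _ _ _ ρ hρ hm
    refine hx V ρ hρ ?_
    rw [mult_character] at hm
    have hne : eig ρ (Subgroup.zpowers x) l ≠ ⊥ := fun h => hm (by rw [h, finrank_bot])
    obtain ⟨v, hv, hv0⟩ := Submodule.exists_mem_ne_zero_of_ne_bot hne
    rw [eq_bot_iff]
    rintro a ⟨ha, hax⟩
    have h1 := hv ⟨a, hax⟩
    have h2 : ρ a = 1 := ha
    rw [h2, Module.End.one_apply] at h1
    have h3 : ((l ⟨a, hax⟩ : ℂ) - 1) • v = 0 := by rw [sub_smul, ← h1]; simp
    have h4 : (l ⟨a, hax⟩ : ℂ) = 1 := sub_eq_zero.mp ((smul_eq_zero.mp h3).resolve_right hv0)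
    have h5 : l ⟨a, hax⟩ = l 1 := by rw [map_one]; exact Units.ext h4
    exact congrArg Subtype.val (hl h5)
  have hsum := sum_charDeg_mul_mult (Subgroup.zpowers x) l
  have hidx : (Subgroup.zpowers x).index ≠ 0 := Subgroup.index_ne_zero_of_finite
  obtain ⟨χ, hχ, hχ0⟩ := Finset.exists_ne_zero_of_sum_ne_zero (hsum ▸ hidx)
  obtain ⟨V, _, _, _, ρ, hρ, rfl⟩ := mem_irr.mp hχ
  have hker := hmult V ρ hρ (right_ne_zero_of_mul hχ0)
  obtain ⟨c, hc⟩ := finrank_dvd_index hρ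
  have hcm : c ∈ codSet G := mem_codSet_iff.mpr
    ⟨V, inferInstance, inferInstance, inferInstance, ρ, hρ, by rw [hc, mul_comm]⟩
  rw [hker, Subgroup.index_bot] at hc
  refine ⟨V, inferInstance, inferInstance, inferInstance, ρ, c, hρ, hker, hcm,
    by rw [hc, mul_comm], ?_⟩
  have hd : finrank ℂ V ∣ (Subgroup.zpowers x).index := by
    rw [← hsum]
    refine Finset.dvd_sum fun ψ hψ => ?_
    obtain ⟨W, _, _, _, σ, hσ, rfl⟩ := mem_irr.mp hψ
    by_cases h0 : mult (Subgroup.zpowers x) l σ.character = 0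
    · simp [h0]
    · rw [faithful_finrank_eq H hρ hσ hker (hmult W σ hσ h0), charDeg_character]
      exact Dvd.intro _ rfl
  obtain ⟨k, hk⟩ := hd
  have h1 := Subgroup.card_mul_index (Subgroup.zpowers x)
  rw [Nat.card_zpowers, hk, hc] at h1
  have hV := ((irreducible_iff ρ).mp hρ).1
  have hpos : 0 < finrank ℂ V := finrank_pos
  refine ⟨k, Nat.eq_of_mul_eq_mul_left hpos ?_⟩
  rw [← h1]; ring

omit [Finite G] in
/-- Under the coprimality hypothesis the order of every element divides a codegree. -/
theorem exists_orderOf_dvd (n : ℕ) : ∀ (G : Type) [Group G] [Finite G], Nat.card G = n →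
    (codSet G).Pairwise Nat.Coprime → ∀ x : G, ∃ c ∈ codSet G, orderOf x ∣ c := by
  induction n using Nat.strong_induction_on with
  | _ n ih =>
  intro G _ _ hn H x
  by_cases hL : ∃ L : Subgroup G, L.Normal ∧ L ≠ ⊥ ∧ L ⊓ Subgroup.zpowers x = ⊥
  · obtain ⟨L, hLn, hL0, hLx⟩ := hL
    have hlt : Nat.card (G ⧸ L) < n := by
      have h1 := Subgroup.card_mul_index L
      have h2 : 1 < Nat.card L := (Subgroup.one_lt_card_iff_ne_bot L).mpr hL0
      have h3 : 0 < L.index := Nat.pos_of_ne_zero Subgroup.index_ne_zero_of_finite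
      rw [← hn, ← h1]
      change L.index < _
      nlinarith
    obtain ⟨c, hc, hxc⟩ := ih _ hlt (G ⧸ L) rfl (H.mono (codSet_quotient_subset L)) (x : G ⧸ L)
    refine ⟨c, codSet_quotient_subset L hc, ?_⟩
    refine (orderOf_dvd_of_pow_eq_one ?_).trans hxc
    have h1 : x ^ orderOf (x : G ⧸ L) ∈ L := by
      rw [← QuotientGroup.eq_one_iff, QuotientGroup.mk_pow, pow_orderOf_eq_one]
    have h2 : x ^ orderOf (x : G ⧸ L) ∈ L ⊓ Subgroup.zpowers x :=
      ⟨h1, Subgroup.npow_mem_zpowers x _⟩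
    rw [hLx] at h2
    exact h2
  · push Not at hL
    obtain ⟨V, _, _, _, ρ, c, -, -, hc, -, hxc⟩ := orderOf_dvd_of_faithful H x
      fun V _ _ _ ρ _ h => by
        by_contra h0
        exact hL _ inferInstance h0 h
    exact ⟨c, hc, hxc⟩

theorem exists_prime_dvd_codSet (H : (codSet G).Pairwise Nat.Coprime) {p : ℕ} (hp : p.Prime)
    (hpG : p ∣ Nat.card G) : ∃ c ∈ codSet G, p ∣ c := by
  have := Fact.mk hp
  obtain ⟨x, hx⟩ := exists_prime_orderOf_dvd_card' p hpG
  obtain ⟨c, hc, h⟩ := exists_orderOf_dvd _ G rfl H x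
  exact ⟨c, hc, hx ▸ h⟩

end

/-! ### Groups with elements of prime power order -/

section

/-- Every element has prime power order: at most one prime divides the order of an element. -/
def PrimePowerOrders (G : Type) [Group G] : Prop :=
  ∀ x : G, ∀ p q : ℕ, p.Prime → q.Prime → p ∣ orderOf x → q ∣ orderOf x → p = q

theorem PrimePowerOrders.quotient {G : Type} [Group G] (h : PrimePowerOrders G) (N : Subgroup G)
    [N.Normal] : PrimePowerOrders (G ⧸ N) := by
  intro x p q hp hq hpx hqx
  obtain ⟨g, rfl⟩ := QuotientGroup.mk_surjective x
  have hd := orderOf_map_dvd (QuotientGroup.mk' N) g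
  exact h g p q hp hq (hpx.trans hd) (hqx.trans hd)

theorem card_quotient_lt {G : Type} [Group G] [Finite G] {N : Subgroup G} (hN : N ≠ ⊥) :
    Nat.card (G ⧸ N) < Nat.card G := by
  have h1 := Subgroup.card_mul_index N
  have h2 : 1 < Nat.card N := (Subgroup.one_lt_card_iff_ne_bot N).mpr hN
  have h3 : 0 < N.index := Nat.pos_of_ne_zero Subgroup.index_ne_zero_of_finite
  rw [← h1]
  change N.index < _
  nlinarith

/-- A nontrivial finite solvable group has a nontrivial elementary abelian normal subgroup. -/
theorem exists_normal_elementary (G : Type) [Group G] [Finite G] [Group.IsSolvable G]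
    [Nontrivial G] : ∃ (N : Subgroup G) (r : ℕ), r.Prime ∧ N.Normal ∧ N ≠ ⊥ ∧
      (∀ a ∈ N, ∀ b ∈ N, a * b = b * a) ∧ ∀ a ∈ N, a ^ r = 1 := by
  have hex := (Group.isSolvable_def G).mp inferInstance
  have h0 : Nat.find hex ≠ 0 := by
    intro h
    have := Nat.find_spec hex
    rw [h, derivedSeries_zero] at this
    exact top_ne_bot this
  obtain ⟨k, hk⟩ := Nat.exists_eq_succ_of_ne_zero h0
  have hA0 : derivedSeries G k ≠ ⊥ := Nat.find_min hex (by omega)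
  have hA1 : ⁅derivedSeries G k, derivedSeries G k⁆ = ⊥ := by
    rw [← derivedSeries_succ, ← Nat.succ_eq_add_one, ← hk]
    exact Nat.find_spec hex
  have hAn : (derivedSeries G k).Normal := derivedSeries_normal G k
  generalize derivedSeries G k = A at hA0 hA1 hAn
  have hcomm : ∀ a ∈ A, ∀ b ∈ A, a * b = b * a := by
    intro a ha b hb
    have := Subgroup.commutator_mem_commutator ha hb
    rw [hA1, Subgroup.mem_bot, commutatorElement_eq_one_iff_mul_comm] at this
    exact this
  have hcard : Nat.card A ≠ 1 := fun h => hA0 (Subgroup.card_eq_one.mp h)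
  obtain ⟨r, hr, hrA⟩ := Nat.exists_prime_and_dvd hcard
  have := Fact.mk hr
  obtain ⟨x, hx⟩ := exists_prime_orderOf_dvd_card' r hrA
  let N : Subgroup G :=
    { carrier := {a | a ∈ A ∧ a ^ r = 1}
      mul_mem' := by
        rintro a b ⟨ha, ha'⟩ ⟨hb, hb'⟩
        refine ⟨mul_mem ha hb, ?_⟩
        rw [Commute.mul_pow (hcomm a ha b hb), ha', hb', one_mul]
      one_mem' := ⟨one_mem _, one_pow _⟩
      inv_mem' := by
        rintro a ⟨ha, ha'⟩
        exact ⟨inv_mem ha, by rw [inv_pow, ha', inv_one]⟩ }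
  refine ⟨N, r, hr, ⟨?_⟩, ?_, fun a ha b hb => hcomm a ha.1 b hb.1, fun a ha => ha.2⟩
  · rintro a ⟨ha, ha'⟩ g
    exact ⟨hAn.conj_mem a ha g, by rw [conj_pow, ha', mul_one, mul_inv_cancel]⟩
  · intro h
    have hx1 : (x : G) ∈ N :=
      ⟨x.2, by rw [← Subgroup.coe_pow, ← hx, pow_orderOf_eq_one, Subgroup.coe_one]⟩
    rw [h, Subgroup.mem_bot, OneMemClass.coe_eq_one] at hx1
    rw [hx1, orderOf_one] at hx
    exact hr.one_lt.ne hx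

theorem card_eq_prime_pow {G : Type} [Group G] [Finite G] {N : Subgroup G} {r : ℕ} (hr : r.Prime)
    (hN : ∀ a ∈ N, a ^ r = 1) : ∃ k, Nat.card N = r ^ k := by
  have := Fact.mk hr
  refine IsPGroup.iff_card.mp fun a => ⟨1, ?_⟩
  rw [pow_one]
  exact Subtype.ext (hN a a.2)

section

variable {H M : Type} [Group H] [CommGroup M] {ψ : H →* MulAut M}
  (fpf : ∀ h : H, h ≠ 1 → ∀ v, ψ h v = v → v = 1)

include fpf

theorem prod_subgroup_eq_one (A : Subgroup H) [Fintype A] (hA : A ≠ ⊥) (v : M) :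
    ∏ a : A, ψ a v = 1 := by
  obtain ⟨g, hg1⟩ := A.ne_bot_iff_exists_ne_one.mp hA
  refine fpf g (by simpa using hg1) _ ?_
  rw [map_prod]
  refine Fintype.prod_equiv (Equiv.mulLeft g) _ _ fun a => ?_
  simp [map_mul]

theorem prod_range_eq_one {g : H} {t : ℕ} (hg : g ≠ 1) (hgt : g ^ t = 1) (v : M) :
    ∏ i ∈ Finset.range t, ψ (g ^ i) v = 1 := by
  refine fpf g hg _ ?_
  rw [map_prod]
  have h1 : ∀ i, ψ g (ψ (g ^ i) v) = ψ (g ^ (i + 1)) v := by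
    intro i; rw [pow_succ', map_mul]; rfl
  simp only [h1]
  have h2 := Finset.prod_range_succ (fun i => ψ (g ^ i) v) t
  rw [Finset.prod_range_succ', hgt, pow_zero] at h2
  exact mul_right_cancel h2

/-- Let `H` act without nontrivial fixed points. If `A` is normal in `H` and every element of a
coset `A b` has prime order `t`, then summing `∑ᵢ (a b)ⁱ v = 0` over `a ∈ A` leaves `|A| v = 0`,
as the elements `(a b)ⁱ b⁻ⁱ` run over `A` for every `0 < i < t`. -/
theorem pow_card_eq_one_of_fpf [Finite H] (A : Subgroup H) [A.Normal] (hA : A ≠ ⊥) {b : H} {t : ℕ}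
    (ht : t.Prime) (hb : ∀ a ∈ A, orderOf (a * b) = t) (v : M) : v ^ Nat.card A = 1 := by
  have := Fintype.ofFinite A
  have h1 : ∏ a : A, ∏ i ∈ Finset.range t, ψ ((a * b) ^ i) v = 1 := by
    refine Finset.prod_eq_one fun a _ => prod_range_eq_one fpf ?_ ?_ v
    · intro h
      have := hb a a.2
      rw [h, orderOf_one] at this
      exact ht.one_lt.ne this
    · rw [← hb a a.2, pow_orderOf_eq_one]
  rw [Finset.prod_comm, Finset.prod_eq_single 0] at h1
  · simpa [Nat.card_eq_fintype_card] using h1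
  · intro i hi hi0
    have hcop : Nat.Coprime i t :=
      (Nat.coprime_of_lt_prime hi0 (Finset.mem_range.mp hi) ht).symm
    obtain ⟨j, -, hj⟩ := Nat.exists_mul_mod_eq_one_of_coprime hcop ht.one_lt
    have hmem : ∀ a : A, ((a : H) * b) ^ i * (b ^ i)⁻¹ ∈ A := by
      intro a
      rw [← QuotientGroup.eq_one_iff]
      have ha : ((a : H) : H ⧸ A) = 1 := (QuotientGroup.eq_one_iff _).mpr a.2
      rw [QuotientGroup.mk_mul, QuotientGroup.mk_pow, QuotientGroup.mk_mul, ha, one_mul,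
        QuotientGroup.mk_inv, QuotientGroup.mk_pow, mul_inv_cancel]
    let f : A → A := fun a => ⟨_, hmem a⟩
    have hinv : ∀ a : A, (((a : H) * b) ^ i) ^ j = a * b := by
      intro a
      rw [← pow_mul, ← pow_mod_orderOf, hb a a.2, hj, pow_one]
    have hf : Function.Injective f := by
      intro a a' h
      have h2 : ((a : H) * b) ^ i = (a' * b) ^ i := mul_right_cancel (congrArg Subtype.val h)
      have h3 : (a : H) * b = a' * b := by rw [← hinv a, ← hinv a', h2]
      exact Subtype.ext (mul_right_cancel h3)
    have h4 := (Finite.injective_iff_bijective.mp hf).prod_comp fun a : A => ψ a (ψ (b ^ i) v)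
    rw [prod_subgroup_eq_one fpf A hA] at h4
    rw [← h4]
    refine Finset.prod_congr rfl fun a _ => ?_
    rw [← MulAut.mul_apply, ← map_mul]
    simp [f]
  · intro h
    exact absurd (Finset.mem_range.mpr ht.pos) h

end

/-- In a group with elements of prime power order only, an elementary abelian normal `s`-subgroup
`A` and an element `b` of prime order `t ≠ s`, all elements of `A b` have order `t`. -/
theorem orderOf_mul_eq {H : Type} [Group H] (hH : PrimePowerOrders H) (A : Subgroup H) [A.Normal]
    {s t : ℕ} (hs : s.Prime) (ht : t.Prime) (hst : t ≠ s) (hA : ∀ a ∈ A, a ^ s = 1) {b : H}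
    (hb : orderOf b = t) {a : H} (ha : a ∈ A) : orderOf (a * b) = t := by
  have hab : ((a * b : H) : H ⧸ A) = b := by
    rw [QuotientGroup.mk_mul, (QuotientGroup.eq_one_iff a).mpr ha, one_mul]
  have h1 : (a * b) ^ t ∈ A := by
    rw [← QuotientGroup.eq_one_iff, QuotientGroup.mk_pow, hab, ← QuotientGroup.mk_pow, ← hb,
      pow_orderOf_eq_one, QuotientGroup.mk_one]
  have h2 : orderOf (a * b) ∣ t * s := by
    apply orderOf_dvd_of_pow_eq_one
    rw [pow_mul, hA _ h1]
  have h3 : orderOf (b : H ⧸ A) = t := by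
    have hd : orderOf (b : H ⧸ A) ∣ t := hb ▸ orderOf_map_dvd (QuotientGroup.mk' A) b
    refine ((Nat.dvd_prime ht).mp hd).resolve_left fun h => ?_
    rw [orderOf_eq_one_iff, QuotientGroup.eq_one_iff] at h
    have := orderOf_dvd_of_pow_eq_one (hA b h)
    rw [hb] at this
    exact hst ((Nat.prime_dvd_prime_iff_eq ht hs).mp this)
  have h4 : t ∣ orderOf (a * b) := by
    rw [← h3, ← hab]
    exact orderOf_map_dvd (QuotientGroup.mk' A) (a * b)
  have h5 : ¬ s ∣ orderOf (a * b) := fun h => hst (hH _ _ _ ht hs h4 h)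
  have h6 : Nat.Coprime (orderOf (a * b)) s := ((Nat.Prime.coprime_iff_not_dvd hs).mpr h5).symm
  exact Nat.dvd_antisymm (h6.dvd_of_dvd_mul_right h2) h4

/-- As no element of `G` has order divisible by two primes, `G/N`, of order prime to `r`, acts
without nontrivial fixed points on the abelian `r`-group `N`. If two primes divided `|G/N|`, an
elementary abelian normal subgroup `A` of `G/N` and an element `b` of prime order not dividing `|A|`
would satisfy the hypotheses of `pow_card_eq_one_of_fpf`, making `r` divide `|A|`. -/
theorem prime_unique_of_quotient {G : Type} [Group G] [Finite G] (hG : PrimePowerOrders G)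
    [Group.IsSolvable G] (N : Subgroup G) [N.Normal] (hN0 : N ≠ ⊥)
    (hNc : ∀ a ∈ N, ∀ b ∈ N, a * b = b * a) {r : ℕ} (hr : r.Prime) (hNr : ∀ a ∈ N, a ^ r = 1)
    (hrG : ¬ r ∣ Nat.card (G ⧸ N)) : (Nat.card (G ⧸ N)).primeFactors.card ≤ 1 := by
  let icomm : CommGroup N := { (inferInstance : Group N) with
    mul_comm := fun a b => Subtype.ext (hNc a a.2 b b.2) }
  let ψ : G ⧸ N →* MulAut N := QuotientGroup.lift N MulAut.conjNormal fun n hn => by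
    ext v
    rw [MulAut.conjNormal_apply, hNc n hn v v.2, mul_inv_cancel_right]
    rfl
  have fpf : ∀ h : G ⧸ N, h ≠ 1 → ∀ v, ψ h v = v → v = 1 := by
    intro h hh v hv
    by_contra hv1
    obtain ⟨x, rfl⟩ := QuotientGroup.mk_surjective h
    have hvx : x * v * x⁻¹ = v := congrArg Subtype.val hv
    have hcom : Commute x (v : G) := mul_inv_eq_iff_eq_mul.mp hvx
    obtain ⟨l, hl, hlx⟩ := Nat.exists_prime_and_dvd (mt orderOf_eq_one_iff.mp hh)
    have hlr : l ≠ r := fun h => hrG (h ▸ hlx.trans (orderOf_dvd_natCard _))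
    have hlx' : l ∣ orderOf x := hlx.trans (orderOf_map_dvd (QuotientGroup.mk' N) x)
    have hov : orderOf (v : G) = r :=
      have := Fact.mk hr
      orderOf_eq_prime (hNr v v.2) (by simpa using hv1)
    have hco : Nat.Coprime (orderOf x) (orderOf (v : G)) := by
      rw [hov]
      exact ((Nat.Prime.coprime_iff_not_dvd hr).mpr
        fun h => hlr (hG x _ _ hl hr hlx' h)).symm
    have hxv := hcom.orderOf_mul_eq_mul_orderOf_of_coprime hco
    exact hlr (hG (x * v) _ _ hl hr (hxv ▸ hlx'.mul_right _)
      (hxv ▸ hov ▸ Dvd.intro_left _ rfl))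
  by_contra hcard
  push Not at hcard
  have hnt : Nontrivial (G ⧸ N) := by
    by_contra h
    rw [not_nontrivial_iff_subsingleton] at h
    rw [Nat.card_eq_one_iff_unique.mpr ⟨h, inferInstance⟩] at hcard
    simp at hcard
  obtain ⟨A, s, hs, hAn, hA0, -, hAs⟩ := exists_normal_elementary (G ⧸ N)
  obtain ⟨t, htm, hts⟩ := Finset.exists_mem_ne hcard s
  have ht := Nat.prime_of_mem_primeFactors htm
  have := Fact.mk ht
  obtain ⟨b, hb⟩ := exists_prime_orderOf_dvd_card' t (Nat.dvd_of_mem_primeFactors htm)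
  have hpow := pow_card_eq_one_of_fpf fpf A hA0 ht
    fun a ha => orderOf_mul_eq (hG.quotient N) A hs ht hts hAs hb ha
  obtain ⟨v, hv1⟩ := N.ne_bot_iff_exists_ne_one.mp hN0
  have hov : orderOf v = r := by
    have := Fact.mk hr
    exact orderOf_eq_prime (Subtype.ext (hNr v v.2)) hv1
  have h1 : r ∣ Nat.card A := hov ▸ orderOf_dvd_of_pow_eq_one (hpow v)
  exact hrG (h1.trans (Subgroup.card_subgroup_dvd_card A))

/-- A finite solvable group whose elements have prime power order involves at most two primes. -/
theorem card_primeFactors_le_two (n : ℕ) : ∀ (G : Type) [Group G] [Finite G] [Group.IsSolvable G],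
    Nat.card G = n → PrimePowerOrders G → (Nat.card G).primeFactors.card ≤ 2 := by
  induction n using Nat.strong_induction_on with
  | _ n ih =>
  intro G _ _ _ hn hG
  rcases subsingleton_or_nontrivial G with h | h
  · rw [Nat.card_eq_one_iff_unique.mpr ⟨h, inferInstance⟩]; simp
  obtain ⟨N, r, hr, hNn, hN0, hNc, hNr⟩ := exists_normal_elementary G
  obtain ⟨k, hk⟩ := card_eq_prime_pow hr hNr
  have hk0 : k ≠ 0 := by
    rintro rfl
    exact hN0 (Subgroup.card_eq_one.mp (by simpa using hk))
  have hpf : (Nat.card G).primeFactors = {r} ∪ (Nat.card (G ⧸ N)).primeFactors := by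
    rw [Subgroup.card_eq_card_quotient_mul_card_subgroup N, hk,
      Nat.primeFactors_mul Nat.card_pos.ne' (pow_pos hr.pos _).ne',
      Nat.primeFactors_prime_pow hk0 hr, Finset.union_comm]
  by_cases hrq : r ∣ Nat.card (G ⧸ N)
  · have hsub : {r} ⊆ (Nat.card (G ⧸ N)).primeFactors := by
      rw [Finset.singleton_subset_iff]
      exact Nat.mem_primeFactors.mpr ⟨hr, hrq, Nat.card_pos.ne'⟩
    rw [hpf, Finset.union_eq_right.mpr hsub]
    exact ih _ (hn ▸ card_quotient_lt hN0) (G ⧸ N) rfl (hG.quotient N)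
  · have h1 := prime_unique_of_quotient hG N hN0 hNc hr hNr hrq
    have h2 := Finset.card_union_le {r} (Nat.card (G ⧸ N)).primeFactors
    rw [Finset.card_singleton] at h2
    rw [hpf]; omega

end

/-! ### Solvability and the structure of codegrees -/

section

/-- Clifford's theorem, in the case where the degree is coprime to `|N|`: the constituents of the
restriction to `N` have equal degree, which divides both `|N|` and the degree, so they are linear
and `[N, N]` acts trivially. -/
theorem commutator_le_ker {G : Type} [Group G] [Finite G] {V : Type} [AddCommGroup V] [Module ℂ V]
    [FiniteDimensional ℂ V] {ρ : Representation ℂ G V} (hρ : ρ.IsIrreducible) (N : Subgroup G)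
    [hN : N.Normal] (hcop : Nat.Coprime (Nat.card N) (finrank ℂ V)) :
    ⁅N, N⁆ ≤ MonoidHom.ker ρ := by
  have hV := ((irreducible_iff ρ).mp hρ).1
  have hinv : ∀ g v, ρ g (ρ g⁻¹ v) = v := fun g v => by
    rw [← Module.End.mul_apply, ← map_mul, mul_inv_cancel, map_one, Module.End.one_apply]
  have hinv' : ∀ g v, ρ g⁻¹ (ρ g v) = v := fun g v => by
    rw [← Module.End.mul_apply, ← map_mul, inv_mul_cancel, map_one, Module.End.one_apply]
  have hconj : ∀ g n v, ρ n (ρ g v) = ρ g (ρ (g⁻¹ * n * g) v) := fun g n v => by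
    rw [← Module.End.mul_apply, ← Module.End.mul_apply, ← map_mul, ← map_mul]
    congr 2; group
  have hNc : ∀ g, ∀ n ∈ N, g⁻¹ * n * g ∈ N := fun g n hn => by
    simpa using hN.conj_mem n hn g⁻¹
  let Inv : Submodule ℂ V → Prop := fun U => ∀ n ∈ N, ∀ v ∈ U, ρ n v ∈ U
  obtain ⟨W, ⟨hW0, hWinv⟩, hWmin⟩ := exists_minimal_of_wellFoundedLT
    (fun U : Submodule ℂ V => U ≠ ⊥ ∧ Inv U) ⟨⊤, top_ne_bot, fun _ _ _ _ => Submodule.mem_top⟩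
  have hmin : ∀ U, Inv U → W ⊓ U = ⊥ ∨ W ≤ U := by
    intro U hU
    by_cases h : W ⊓ U = ⊥
    · exact Or.inl h
    · exact Or.inr ((hWmin ⟨h, fun n hn v hv => ⟨hWinv n hn v hv.1, hU n hn v hv.2⟩⟩
        inf_le_left).trans inf_le_right)
  -- `W` is an irreducible representation of `N`, so its dimension divides `|N|`.
  have hWN : finrank ℂ W ∣ Nat.card N := by
    let A : Subrepresentation (MonoidHom.comp ρ N.subtype : Representation ℂ N V) :=
      ⟨W, fun n v hv => hWinv n n.2 v hv⟩
    refine finrank_dvd_card A.toRepresentation ((irreducible_iff _).mpr ⟨?_, fun U hU => ?_⟩)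
    · exact (Submodule.nontrivial_iff_ne_bot (p := W)).mpr hW0
    · have hU' : Inv (U.map W.subtype) := by
        rintro n hn _ ⟨u, hu, rfl⟩
        exact ⟨_, hU ⟨n, hn⟩ u hu, rfl⟩
      rcases hmin _ hU' with h | h
      · left
        rw [inf_eq_right.mpr (Submodule.map_subtype_le W U)] at h
        rw [eq_bot_iff]
        intro u hu
        have hu' : (u : V) ∈ U.map W.subtype := ⟨u, hu, rfl⟩
        rw [h, Submodule.mem_bot] at hu'
        exact Subtype.ext hu'
      · right
        rw [eq_top_iff]
        rintro ⟨w, hw⟩ -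
        obtain ⟨u, hu, huw⟩ := h hw
        have : u = ⟨w, hw⟩ := Subtype.ext huw
        exact this ▸ hu
  let T : G → Submodule ℂ V := fun g => W.map (ρ g)
  have hTinv : ∀ g, Inv (T g) := by
    rintro g n hn _ ⟨w, hw, rfl⟩
    exact ⟨ρ (g⁻¹ * n * g) w, hWinv _ (hNc g n hn) w hw, (hconj g n w).symm⟩
  have hTfin : ∀ g, finrank ℂ (T g) = finrank ℂ W := fun g =>
    (LinearEquiv.finrank_eq (Submodule.equivMapOfInjective (ρ g)
      (Function.LeftInverse.injective (hinv' g)) W)).symm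
  have hTmin : ∀ g U, Inv U → T g ⊓ U = ⊥ ∨ T g ≤ U := by
    intro g U hU
    have hU' : Inv (U.comap (ρ g)) := by
      intro n hn v hv
      have h1 := hU (g * n * g⁻¹) (hN.conj_mem n hn g) _ hv
      rw [hconj] at h1
      have h2 : g⁻¹ * (g * n * g⁻¹) * g = n := by group
      rwa [h2] at h1
    rcases hmin _ hU' with h | h
    · left
      rw [eq_bot_iff]
      rintro _ ⟨⟨w, hw, rfl⟩, hwU⟩
      have : w ∈ W ⊓ U.comap (ρ g) := ⟨hw, hwU⟩
      rw [h, Submodule.mem_bot] at this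
      simp [this]
    · exact Or.inr (Submodule.map_le_iff_le_comap.mpr h)
  have hsup : ∀ s : Finset G, Inv (s.sup T) ∧ finrank ℂ W ∣ finrank ℂ (s.sup T : Submodule ℂ V) := by
    intro s
    induction s using Finset.induction_on with
    | empty =>
      rw [Finset.sup_empty, finrank_bot]
      refine ⟨fun n hn v hv => ?_, dvd_zero _⟩
      rw [Submodule.mem_bot] at hv ⊢
      rw [hv, map_zero]
    | insert g s _ ih =>
      obtain ⟨ih1, ih2⟩ := ih
      rw [Finset.sup_insert]
      refine ⟨fun n hn v hv => ?_, ?_⟩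
      · obtain ⟨a, ha, b, hb, rfl⟩ := Submodule.mem_sup.mp hv
        rw [map_add]
        exact Submodule.add_mem_sup (hTinv g n hn a ha) (ih1 n hn b hb)
      · rcases hTmin g _ ih1 with h | h
        · have h1 := Submodule.finrank_sup_add_finrank_inf_eq (T g) (s.sup T)
          rw [h, finrank_bot, add_zero, hTfin] at h1
          rw [h1]
          exact (Nat.dvd_add_right dvd_rfl).mpr ih2
        · rw [sup_eq_right.mpr h]; exact ih2
  have := Fintype.ofFinite G
  have htop : (Finset.univ : Finset G).sup T = ⊤ := by
    refine (((irreducible_iff ρ).mp hρ).2 _ fun g => ?_).resolve_left fun h => hW0 ?_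
    · change Finset.univ.sup T ≤ (Finset.univ.sup T).comap (ρ g)
      refine Finset.sup_le fun h _ => ?_
      rintro _ ⟨w, hw, rfl⟩
      refine (Finset.le_sup (f := T) (Finset.mem_univ (g * h))) ⟨w, hw, ?_⟩
      rw [map_mul]; rfl
    · rw [eq_bot_iff, ← h]
      have h1 : W ≤ T 1 := fun w hw => ⟨w, hw, by rw [map_one]; rfl⟩
      exact h1.trans (Finset.le_sup (f := T) (Finset.mem_univ 1))
  have hWV := (hsup Finset.univ).2
  rw [htop, finrank_top] at hWV
  obtain ⟨w, hw0, hw⟩ := finrank_eq_one_iff'.mp (Nat.eq_one_of_dvd_coprimes hcop hWN hWV)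
  have hmul : ∀ n ∈ N, ∃ a : ℂ, ∀ u ∈ W, ρ n u = a • u := by
    intro n hn
    obtain ⟨a, ha⟩ := hw ⟨ρ n w, hWinv n hn w w.2⟩
    have ha' : a • (w : V) = ρ n w := congrArg Subtype.val ha
    refine ⟨a, fun u hu => ?_⟩
    obtain ⟨b, hb⟩ := hw ⟨u, hu⟩
    have hb' : b • (w : V) = u := congrArg Subtype.val hb
    rw [← hb', map_smul, ← ha', smul_comm]
  have hle : ⁅N, N⁆ ≤ ({ carrier := {g | ρ g w = w}
                         mul_mem' := fun {a b} ha hb => by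
                          change ρ (a * b) w = w
                          rw [map_mul, Module.End.mul_apply, hb, ha]
                         one_mem' := by change ρ 1 w = w; rw [map_one]; rfl
                         inv_mem' := fun {a} ha => by
                          change ρ a⁻¹ w = w
                          conv_lhs => rw [← show ρ a w = w from ha, hinv'] } : Subgroup G) := by
    rw [Subgroup.commutator_le]
    intro n hn m hm
    rw [commutatorElement_def]
    change ρ (n * m * n⁻¹ * m⁻¹) w = w
    obtain ⟨a, ha⟩ := hmul n hn
    obtain ⟨b, hb⟩ := hmul m hm
    have hu : ρ (m * n)⁻¹ w ∈ W := hWinv _ (inv_mem (mul_mem hm hn)) w w.2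
    have h1 : n * m * n⁻¹ * m⁻¹ = (n * m) * (m * n)⁻¹ := by group
    have h2 : ρ (n * m) (ρ (m * n)⁻¹ w) = ρ (m * n) (ρ (m * n)⁻¹ w) := by
      generalize ρ (m * n)⁻¹ (w : V) = u at hu
      rw [map_mul, map_mul, Module.End.mul_apply, Module.End.mul_apply, hb u hu, ha u hu,
        map_smul, map_smul, ha u hu, hb u hu, smul_comm]
    rw [h1, map_mul, Module.End.mul_apply, h2, hinv]
  by_contra hker
  have heig := eig_one_eq hρ ⁅N, N⁆
  rw [if_neg hker] at heig
  have hmem : (w : V) ∈ eig ρ ⁅N, N⁆ 1 := by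
    rw [mem_eig]
    intro a
    simpa using hle a.2
  rw [heig, Submodule.mem_bot] at hmem
  exact hw0 (Subtype.ext hmem)

/-- Under the coprimality hypothesis, the codegrees of a solvable group are prime powers. -/
theorem prime_unique_of_dvd_codSet (n : ℕ) : ∀ (G : Type) [Group G] [Finite G]
    [Group.IsSolvable G], Nat.card G = n → (codSet G).Pairwise Nat.Coprime →
    ∀ c ∈ codSet G, ∀ p q : ℕ, p.Prime → q.Prime → p ∣ c → q ∣ c → p = q := by
  induction n using Nat.strong_induction_on with
  | _ n ih =>
  intro G _ _ _ hn H c hc p q hp hq hpc hqc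
  have hcG := codSet_dvd_card hc
  rcases subsingleton_or_nontrivial G with h | h
  · rw [Nat.card_eq_one_iff_unique.mpr ⟨h, inferInstance⟩] at hcG
    exact absurd (Nat.dvd_one.mp (hpc.trans hcG)) hp.one_lt.ne'
  obtain ⟨N, r, hr, hNn, hN0, -, hNr⟩ := exists_normal_elementary G
  have hsub := codSet_quotient_subset N
  by_cases hcN : c ∈ codSet (G ⧸ N)
  · exact ih _ (hn ▸ card_quotient_lt hN0) (G ⧸ N) rfl (H.mono hsub) c hcN p q hp hq hpc hqc
  · obtain ⟨k, hk⟩ := card_eq_prime_pow hr hNr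
    have key : ∀ l : ℕ, l.Prime → l ∣ c → l = r := by
      intro l hl hlc
      have h1 : ¬ l ∣ Nat.card (G ⧸ N) := by
        intro h
        obtain ⟨e, he, hle⟩ := exists_prime_dvd_codSet (H.mono hsub) hl h
        have hce : c ≠ e := fun h => hcN (h ▸ he)
        exact Nat.not_coprime_of_dvd_of_dvd hl.one_lt hlc hle (H hc (hsub he) hce)
      have h2 := hlc.trans hcG
      rw [Subgroup.card_eq_card_quotient_mul_card_subgroup N, hk] at h2
      exact (Nat.prime_dvd_prime_iff_eq hl hr).mp
        (hl.dvd_of_dvd_pow ((hl.dvd_mul.mp h2).resolve_left h1))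
    rw [key p hp hpc, key q hq hqc]

/-- If `N` lies in every nontrivial normal subgroup, the faithful irreducible characters are those
that do not contain `N` in their kernel; when they all have degree `d`, summing squares of degrees
gives `d ∣ |G| - |G/N|`. -/
theorem exists_card_eq_add {G : Type} [Group G] [Finite G] (N : Subgroup G) [N.Normal] (d : ℕ)
    (hd : ∀ (V : Type) [AddCommGroup V] [Module ℂ V] [FiniteDimensional ℂ V]
      (ρ : Representation ℂ G V), ρ.IsIrreducible → ¬ N ≤ MonoidHom.ker ρ → finrank ℂ V = d) :
    ∃ k, Nat.card G = Nat.card (G ⧸ N) + d * k := by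
  have h1 : d ∣ ∑ χ ∈ irr G, (charDeg χ * charDeg χ - charDeg χ * mult N 1 χ) := by
    refine Finset.dvd_sum fun χ hχ => ?_
    obtain ⟨V, _, _, _, ρ, hρ, rfl⟩ := mem_irr.mp hχ
    rw [mult_one_character hρ, charDeg_character]
    split_ifs with h
    · simp
    · rw [hd V ρ hρ h]; simp
  obtain ⟨k, hk⟩ := h1
  refine ⟨k, ?_⟩
  have h2 : Nat.card (G ⧸ N) = ∑ χ ∈ irr G, charDeg χ * mult N 1 χ :=
    (sum_charDeg_mul_mult N 1).symm
  rw [← hk, h2, ← Finset.sum_add_distrib, ← sum_charDeg_sq]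
  refine Finset.sum_congr rfl fun χ hχ => ?_
  obtain ⟨V, _, _, _, ρ, hρ, rfl⟩ := mem_irr.mp hχ
  rw [mult_one_character hρ, charDeg_character]
  split_ifs <;> simp

/-- In a minimal counterexample to solvability there is a nontrivial normal subgroup contained in
all others. -/
theorem exists_least_normal {G : Type} [Group G] [Finite G] (hG : ¬ Group.IsSolvable G)
    (hq : ∀ L : Subgroup G, ∀ [L.Normal], L ≠ ⊥ → Group.IsSolvable (G ⧸ L)) :
    ∃ N : Subgroup G, N.Normal ∧ N ≠ ⊥ ∧ ∀ L : Subgroup G, L.Normal → L ≠ ⊥ → N ≤ L := by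
  have hnt : (⊤ : Subgroup G) ≠ ⊥ := by
    intro h
    have : Subsingleton G := (Subgroup.subsingleton_iff).mp (subsingleton_of_bot_eq_top h.symm)
    exact hG inferInstance
  obtain ⟨N, ⟨hNn, hN0⟩, hmin⟩ := Set.exists_min_image {L : Subgroup G | L.Normal ∧ L ≠ ⊥}
    (fun L => Nat.card L) (Set.toFinite _) ⟨⊤, inferInstance, hnt⟩
  refine ⟨N, hNn, hN0, fun L hLn hL0 => ?_⟩
  by_cases h : N ⊓ L = ⊥
  · have := hq N hN0
    have := hq L hL0
    refine absurd (Group.isSolvable_of_isSolvable_injective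
      (f := (QuotientGroup.mk' N).prod (QuotientGroup.mk' L)) ?_) hG
    rw [← MonoidHom.ker_eq_bot_iff, MonoidHom.ker_prod, QuotientGroup.ker_mk',
      QuotientGroup.ker_mk', h]
  · have h1 : N ⊓ L = N :=
      Subgroup.eq_of_le_of_card_ge inf_le_left (hmin _ ⟨inferInstance, h⟩)
    exact inf_eq_left.mp h1

theorem isSolvable_of_isSolvable_normal {G : Type} [Group G] (N : Subgroup G) [N.Normal]
    [Group.IsSolvable N] [Group.IsSolvable (G ⧸ N)] : Group.IsSolvable G :=
  Group.isSolvable_of_ker_le_range N.subtype (QuotientGroup.mk' N) (by simp)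

/-- The coprimality hypothesis forces solvability. -/
theorem isSolvable_of_coprime (n : ℕ) : ∀ (G : Type) [Group G] [Finite G], Nat.card G = n →
    (codSet G).Pairwise Nat.Coprime → Group.IsSolvable G := by
  induction n using Nat.strong_induction_on with
  | _ n ih =>
  intro G _ _ hn H
  by_contra hG
  have hq : ∀ L : Subgroup G, ∀ [L.Normal], L ≠ ⊥ → Group.IsSolvable (G ⧸ L) := fun L _ hL =>
    ih _ (hn ▸ card_quotient_lt hL) (G ⧸ L) rfl (H.mono (codSet_quotient_subset L))
  obtain ⟨N, hNn, hN0, hleast⟩ := exists_least_normal hG hq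
  have hsub := codSet_quotient_subset N
  have hGN := hq N hN0
  refine hG ?_
  suffices Group.IsSolvable N from isSolvable_of_isSolvable_normal N
  have hfaith : ∀ (V : Type) [AddCommGroup V] [Module ℂ V] [FiniteDimensional ℂ V]
      (ρ : Representation ℂ G V), ¬ N ≤ MonoidHom.ker ρ → MonoidHom.ker ρ = ⊥ := by
    intro V _ _ _ ρ h
    by_contra h0
    exact h (hleast _ inferInstance h0)
  have hord : ∀ x : N, x ≠ 1 → _ := fun x hx => orderOf_dvd_of_faithful H (x : G)
    fun V _ _ _ ρ _ h => hfaith V ρ fun hN => by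
      have h1 : (x : G) ∈ MonoidHom.ker ρ ⊓ Subgroup.zpowers (x : G) :=
        ⟨hN x.2, Subgroup.mem_zpowers _⟩
      rw [h, Subgroup.mem_bot] at h1
      exact hx (Subtype.ext h1)
  obtain ⟨x₀, hx₀⟩ := N.ne_bot_iff_exists_ne_one.mp hN0
  obtain ⟨V, _, _, _, ρ, c, hρ, hker, hc, hcd, -⟩ := hord x₀ hx₀
  have hpos : 0 < finrank ℂ V := by
    have := ((irreducible_iff ρ).mp hρ).1
    exact finrank_pos
  have hdvd : ∀ x : N, orderOf x ∣ c := by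
    intro x
    by_cases hx : x = 1
    · rw [hx, orderOf_one]; exact one_dvd _
    obtain ⟨W, _, _, _, σ, e, hσ, hkerσ, he, hed, hxe⟩ := hord x hx
    rw [← faithful_finrank_eq H hρ hσ hker hkerσ] at hed
    rw [Nat.eq_of_mul_eq_mul_right hpos (hcd.trans hed.symm), ← Subgroup.orderOf_coe]
    exact hxe
  by_cases hcN : c ∈ codSet (G ⧸ N)
  · -- Here `c` is a prime power, hence `N` is a `p`-group.
    obtain ⟨r, hr, hrN⟩ := Nat.exists_prime_and_dvd (mt Subgroup.card_eq_one.mp hN0)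
    have hprime : ∀ {l : ℕ}, l.Prime → l ∣ Nat.card N → l ∣ c := by
      intro l hl hlN
      have := Fact.mk hl
      obtain ⟨x, hx⟩ := exists_prime_orderOf_dvd_card' l hlN
      exact hx ▸ hdvd x
    have h1 := Nat.eq_prime_pow_of_unique_prime_dvd (n := Nat.card N) (p := r) Nat.card_pos.ne'
      fun hl hlN => prime_unique_of_dvd_codSet _ (G ⧸ N) rfl (H.mono hsub) c hcN _ _ hl hr
        (hprime hl hlN) (hprime hr hrN)
    have := Fact.mk hr
    have := (IsPGroup.of_card h1).isNilpotent
    infer_instance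
  · -- Here `c` is coprime to `|G/N|`, which forces `c = |N|` and `χ(1) = |G/N|`.
    have hcop : Nat.Coprime (Nat.card (G ⧸ N)) c := by
      refine (Nat.coprime_of_dvd fun l hl hlc hlG => ?_).symm
      obtain ⟨e, he, hle⟩ := exists_prime_dvd_codSet (H.mono hsub) hl hlG
      have hce : c ≠ e := fun h => hcN (h ▸ he)
      exact Nat.not_coprime_of_dvd_of_dvd hl.one_lt hlc hle (H hc (hsub he) hce)
    have hcard := Subgroup.card_eq_card_quotient_mul_card_subgroup N
    obtain ⟨m, hm⟩ : Nat.card (G ⧸ N) ∣ finrank ℂ V :=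
      hcop.dvd_of_dvd_mul_left (hcd ▸ hcard ▸ Dvd.intro _ rfl)
    have hq0 : 0 < Nat.card (G ⧸ N) := Nat.card_pos
    have hcm : c * m = Nat.card N := by
      refine Nat.eq_of_mul_eq_mul_left hq0 ?_
      rw [← hcard, ← hcd, hm]; ring
    obtain ⟨k, hk⟩ := exists_card_eq_add N (finrank ℂ V) fun W _ _ _ σ hσ h =>
      faithful_finrank_eq H hσ hρ (hfaith W σ h) hker
    have hmk : Nat.card N = 1 + m * k := by
      refine Nat.eq_of_mul_eq_mul_left hq0 ?_
      rw [← hcard, hk, hm]; ring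
    have hm1 : m = 1 := by
      have h1 : m ∣ 1 + m * k := hmk ▸ Dvd.intro_left _ hcm
      exact Nat.dvd_one.mp ((Nat.dvd_add_left (Dvd.intro _ rfl)).mp h1)
    rw [hm1, mul_one] at hm hcm
    have hcomm := commutator_le_ker hρ N (by rw [hm, ← hcm]; exact hcop.symm)
    rw [hker, le_bot_iff] at hcomm
    refine Group.isSolvable_of_comm fun a b => Subtype.ext ?_
    have h1 := Subgroup.commutator_mem_commutator a.2 b.2
    rw [hcomm, Subgroup.mem_bot, commutatorElement_eq_one_iff_mul_comm] at h1
    exact h1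

/-- Distinct nontrivial codegrees have distinct least prime factors, all dividing `|G|`. -/
theorem ncard_codSet_le {G : Type} [Group G] [Finite G] (H : (codSet G).Pairwise Nat.Coprime) :
    (codSet G).ncard ≤ (Nat.card G).primeFactors.card + 1 := by
  have hfin : (codSet G \ {1}).Finite :=
    (Set.Finite.subset (Nat.card G).divisors.finite_toSet fun c hc =>
      Finset.mem_coe.mpr (Nat.mem_divisors.mpr ⟨codSet_dvd_card hc, Nat.card_pos.ne'⟩)).sdiff
  have h1 : (codSet G \ {1}).ncard ≤ ((Nat.card G).primeFactors : Set ℕ).ncard := by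
    refine Set.ncard_le_ncard_of_injOn Nat.minFac ?_ ?_ (Finset.finite_toSet _)
    · rintro c ⟨hc, hc1⟩
      exact Finset.mem_coe.mpr (Nat.mem_primeFactors.mpr ⟨Nat.minFac_prime hc1,
        (Nat.minFac_dvd c).trans (codSet_dvd_card hc), Nat.card_pos.ne'⟩)
    · rintro c ⟨hc, hc1⟩ e ⟨he, he1⟩ hce
      by_contra hne
      exact Nat.not_coprime_of_dvd_of_dvd (Nat.minFac_prime hc1).one_lt (Nat.minFac_dvd c)
        (hce ▸ Nat.minFac_dvd e) (H hc he hne)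
  rw [Set.ncard_coe_finset] at h1
  have h2 : (codSet G).ncard ≤ (insert 1 (codSet G \ {1})).ncard :=
    Set.ncard_le_ncard (by intro c hc; by_cases h : c = 1 <;> simp [h, hc]) (hfin.insert 1)
  have h3 := Set.ncard_insert_le 1 (codSet G \ {1})
  omega

theorem primePowerOrders_of_coprime {G : Type} [Group G] [Finite G] [Group.IsSolvable G]
    (H : (codSet G).Pairwise Nat.Coprime) : PrimePowerOrders G := by
  intro x p q hp hq hpx hqx
  obtain ⟨c, hc, hxc⟩ := exists_orderOf_dvd _ G rfl H x
  exact prime_unique_of_dvd_codSet _ G rfl H c hc p q hp hq (hpx.trans hxc) (hqx.trans hxc)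

end

end

/-- If any two different character codegrees of a finite group `G` are coprime, then `G` is
solvable, `|π(G)| ≤ 2` and `|cod(G)| ≤ 3`. -/
theorem thmD_consequence (G : Type) [Group G] [Finite G]
    (hcop : (codSet G).Pairwise Nat.Coprime) :
    IsSolvable G ∧ (Nat.card G).primeFactors.card ≤ 2 ∧ (codSet G).ncard ≤ 3 := by
  have hsol : Group.IsSolvable G := isSolvable_of_coprime _ G rfl hcop
  have hpi := card_primeFactors_le_two _ G rfl (primePowerOrders_of_coprime hcop)
  exact ⟨hsol, hpi, (ncard_codSet_le hcop).trans (Nat.succ_le_succ hpi)⟩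
end Codegree
end
end

section
/- Let G be a finite group such that for every prime p, at most k elements of cod(G) are divisible by p. Let L ≤ K be normal subgroups of G such that K/L is nilpotent. Then |π(K/L) \ π(G/K)| ≤ k, i.e., the number of primes dividing |K/L| but not dividing |G/K| is at most k. -/
/-!
Let `π = π(K/L) \ π(G/K)` and let `n` be the product of the primes in `π`. Factoring out the normal
subgroup `M` of `G` generated by `L`, `[K, K]` and the `n`-th powers of elements of `K` makes
`A = K/M` abelian of exponent dividing `n`. Since `K/L` is nilpotent, it has a quotient of order `p`
for each `p ∈ π`; hence the primes dividing `|A|` are exactly those in `π`, and `A` is a normal Hall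
subgroup of `G/M`. Its dual group has the same order, so for each `J ⊆ π` there is a linear
character `μ` of `A` of order `∏ p ∈ J, p`.

By the Schur–Zassenhaus theorem `A` has a complement, so `μ` extends to its stabilizer `T`;
inducing this extension gives an irreducible character `χ` of `G`. Concretely, `χ` is afforded by a
monomial representation on the functions on the orbit of `μ`, which is irreducible because distinct
points of the orbit are distinct characters of `A` and the orbit is transitive
(`monomialRep_simple`). Its degree is `|G : T|` and its kernel `N` lies in `T`, so `cod χ = |T : N|`
(`cod_monomial`); in particular no divisibility theorem for character degrees is needed. As
`x ^ |T : N| ∈ N` for `x ∈ A`, the order of `μ` divides `cod χ`. As `x ^ (|G : K| * orderOf μ) ∈ N`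
for all `x ∈ G`, every prime divisor of `cod χ` divides `|G : K| * orderOf μ`
(`exists_irr_of_linear`). So `J` is exactly the set of primes of `π` dividing `cod χ`
(`exists_cod_of_subset`).

Taking for `J` the initial segments `{q ∈ π | q ≤ p}` with `p ∈ π` produces `|π|` different
codegrees, all divisible by the smallest element of `π`.
-/

open scoped Classical

noncomputable section

namespace Codegree

/-! ### Monomial representations -/

/-- The monomial representation of `G` on functions on a `G`-set `Ω` attached to a multiplier
(cocycle) `c : G → Ω → ℂˣ`; it sends the point mass at `ω` to `c g ω` times the point mass at
`g • ω`. -/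
def monomialRep {G Ω : Type} [Group G] [MulAction G Ω] (c : G → Ω → ℂˣ)
    (hc : ∀ g h ω, c (g * h) ω = c g (h • ω) * c h ω) : Representation ℂ G (Ω → ℂ) where
  toFun g :=
    { toFun := fun v ω => c g (g⁻¹ • ω) * v (g⁻¹ • ω)
      map_add' := fun v w => by ext ω; simp [mul_add]
      map_smul' := fun a v => by ext ω; simp; ring }
  map_one' := by
    have h1 : ∀ ω, c 1 ω = 1 := fun ω => by simpa using hc 1 1 ω
    ext v ω; simp [h1]
  map_mul' g h := by
    refine LinearMap.ext fun v => funext fun ω => ?_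
    simp [hc, mul_smul]
    ring

section Monomial

variable {G Ω : Type} [Group G] [MulAction G Ω] (c : G → Ω → ℂˣ)
  (hc : ∀ g h ω, c (g * h) ω = c g (h • ω) * c h ω)

theorem monomialRep_apply (g : G) (v : Ω → ℂ) (ω : Ω) :
    monomialRep c hc g v ω = c g (g⁻¹ • ω) * v (g⁻¹ • ω) := rfl

theorem monomialRep_single (g : G) (ω : Ω) :
    monomialRep c hc g (Pi.single ω 1) = (c g ω : ℂ) • Pi.single (g • ω) 1 := by
  ext ω'
  rw [monomialRep_apply]
  by_cases h : ω' = g • ω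
  · subst h; simp
  · have h' : g⁻¹ • ω' ≠ ω := fun h' => h (by rw [← h']; simp)
    simp [h, h']

theorem multiplier_one (c : G → Ω → ℂˣ)
    (hc : ∀ g h ω, c (g * h) ω = c g (h • ω) * c h ω) (ω : Ω) : c 1 ω = 1 := by
  simpa using hc 1 1 ω

/-- An endomorphism commuting with the monomial representation is a scalar: separation by
elements acting trivially on `Ω` makes it diagonal, and transitivity makes it constant. -/
theorem exists_scalar_of_commute [Finite Ω] [MulAction.IsPretransitive G Ω]
    (hsep : ∀ ω ω' : Ω, ω ≠ ω' → ∃ a : G, (∀ x : Ω, a • x = x) ∧ c a ω ≠ c a ω')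
    (F : (Ω → ℂ) →ₗ[ℂ] (Ω → ℂ))
    (hF : ∀ g v, F (monomialRep c hc g v) = monomialRep c hc g (F v)) :
    ∃ t : ℂ, ∀ v, F v = t • v := by
  rcases isEmpty_or_nonempty Ω with hΩ | ⟨⟨ω₀⟩⟩
  · exact ⟨0, fun v => Subsingleton.elim _ _⟩
  have hdiag : ∀ ω ω', ω' ≠ ω → F (Pi.single ω 1) ω' = 0 := by
    intro ω ω' hne
    obtain ⟨a, ha, hca⟩ := hsep ω ω' hne.symm
    have h := congrFun (hF a (Pi.single ω 1)) ω'
    have ha' : a⁻¹ • ω' = ω' := inv_smul_eq_iff.mpr (ha ω').symm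
    rw [monomialRep_single, monomialRep_apply, map_smul, ha, ha'] at h
    have h2 : ((c a ω : ℂ) - c a ω') * F (Pi.single ω 1) ω' = 0 := by
      rw [sub_mul]; simpa [sub_eq_zero] using h
    refine (mul_eq_zero.mp h2).resolve_left fun h3 => hca (Units.ext (sub_eq_zero.mp h3))
  have hconst : ∀ ω, F (Pi.single ω 1) ω = F (Pi.single ω₀ 1) ω₀ := by
    intro ω
    obtain ⟨g, rfl⟩ := MulAction.exists_smul_eq G ω₀ ω
    have h := congrFun (hF g (Pi.single ω₀ 1)) (g • ω₀)
    rw [monomialRep_single, monomialRep_apply, map_smul] at h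
    simpa using h
  have := Fintype.ofFinite Ω
  refine ⟨F (Pi.single ω₀ 1) ω₀, fun v => ?_⟩
  have : F = F (Pi.single ω₀ 1) ω₀ • LinearMap.id := by
    refine LinearMap.pi_ext' fun ω => LinearMap.ext_ring (funext fun ω' => ?_)
    by_cases h : ω' = ω
    · subst h; simpa using hconst ω'
    · simp [hdiag ω ω' h, h]
  exact congrArg (fun f => f v) this

/-- Simplicity is detected by the endomorphism ring, which consists of scalars by
`exists_scalar_of_commute`. -/
theorem monomialRep_simple [Finite G] [Finite Ω] [Nonempty Ω] [MulAction.IsPretransitive G Ω]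
    (hsep : ∀ ω ω' : Ω, ω ≠ ω' → ∃ a : G, (∀ x : Ω, a • x = x) ∧ c a ω ≠ c a ω') :
    CategoryTheory.Simple (FDRep.of (monomialRep c hc)) := by
  have : NeZero (Nat.card G : ℂ) := ⟨by exact_mod_cast Nat.card_pos.ne'⟩
  rw [FDRep.simple_iff_end_is_rank_one]
  have key : ∀ f : FDRep.of (monomialRep c hc) ⟶ FDRep.of (monomialRep c hc),
      ∃ t : ℂ, t • CategoryTheory.CategoryStruct.id _ = f := by
    intro f
    obtain ⟨t, ht⟩ := exists_scalar_of_commute c hc hsep f.hom.hom.hom (fun g v => by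
      have := f.comm g
      exact congrArg (fun f => f.hom.hom v) this)
    refine ⟨t, ?_⟩
    refine Action.Hom.ext (FGModuleCat.hom_ext (LinearMap.ext fun v => (ht v).symm))
  refine (finrank_eq_one_iff_of_nonzero' (CategoryTheory.CategoryStruct.id _) ?_).mpr key
  intro h
  have h1 : (fun _ : Ω => (1 : ℂ)) = 0 :=
    congrArg (fun f : FDRep.of (monomialRep c hc) ⟶ FDRep.of (monomialRep c hc) =>
      f.hom.hom.hom (fun _ : Ω => (1 : ℂ))) h
  exact one_ne_zero (congrFun h1 (Classical.arbitrary Ω))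

theorem monomialRep_character [Fintype Ω] (g : G) :
    (FDRep.of (monomialRep c hc)).character g = ∑ ω, if g • ω = ω then (c g ω : ℂ) else 0 := by
  change LinearMap.trace ℂ (Ω → ℂ) (monomialRep c hc g) = _
  rw [LinearMap.trace_eq_matrix_trace ℂ (Pi.basisFun ℂ Ω), Matrix.trace]
  refine Finset.sum_congr rfl fun ω _ => ?_
  rw [Matrix.diag_apply, LinearMap.toMatrix_apply]
  simp only [Pi.basisFun_apply, Pi.basisFun_repr, monomialRep_single]
  by_cases h : g • ω = ω
  · simp [h]
  · simp [h, Ne.symm h]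

/-- The kernel of the monomial representation: the elements fixing every `ω` with multiplier `1`. -/
def monomialKer : Subgroup G where
  carrier := {g | ∀ ω, g • ω = ω ∧ c g ω = 1}
  one_mem' ω := ⟨one_smul _ _, multiplier_one c hc ω⟩
  mul_mem' {g h} hg hh ω := by
    rw [mul_smul, hc, (hh ω).1, (hg ω).1, (hg ω).2, (hh ω).2]; simp
  inv_mem' {g} hg ω := by
    have h1 : g⁻¹ • ω = ω := inv_smul_eq_iff.mpr (hg ω).1.symm
    refine ⟨h1, ?_⟩
    have h2 := hc g g⁻¹ ω
    rw [mul_inv_cancel, multiplier_one c hc, h1, (hg ω).2, one_mul] at h2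
    exact h2.symm

theorem mem_monomialKer {g : G} : g ∈ monomialKer c hc ↔ ∀ ω, g • ω = ω ∧ c g ω = 1 := Iff.rfl

instance monomialKer_normal : (monomialKer c hc).Normal where
  conj_mem n hn g ω := by
    have h1 : n • g⁻¹ • ω = g⁻¹ • ω := (hn _).1
    refine ⟨by rw [mul_smul, mul_smul, h1, smul_inv_smul], ?_⟩
    have h2 := hc g g⁻¹ ω
    rw [mul_inv_cancel, multiplier_one c hc] at h2
    rw [hc, hc, h1, (hn _).2, mul_one, ← h2]

/-- When the multiplier is unimodular, the character kernel is the kernel of the representation: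
a sum of `|Ω|` complex numbers of real part at most one has real part `|Ω|` only if each is `1`. -/
theorem charKer_monomial [Finite Ω] (hnorm : ∀ g ω, ‖(c g ω : ℂ)‖ = 1) :
    charKer (FDRep.of (monomialRep c hc)).character = monomialKer c hc := by
  have := Fintype.ofFinite Ω
  ext g
  change _ = _ ↔ _
  rw [monomialRep_character, monomialRep_character, SetLike.mem_coe, mem_monomialKer]
  simp only [one_smul, if_true, multiplier_one c hc, Units.val_one]
  constructor
  · intro h ω
    have hle : ∀ ω ∈ Finset.univ, (if g • ω = ω then (c g ω : ℂ) else 0).re ≤ (1 : ℂ).re := by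
      intro ω _
      split_ifs
      · simpa [hnorm g ω] using Complex.re_le_norm (c g ω : ℂ)
      · simp
    have h' := congrArg Complex.re h
    rw [Complex.re_sum, Complex.re_sum, Finset.sum_eq_sum_iff_of_le hle] at h'
    have h2 := h' ω (Finset.mem_univ ω)
    split_ifs at h2 with hω
    · refine ⟨hω, Units.ext ?_⟩
      have h3 : (c g ω : ℂ).re = ‖(c g ω : ℂ)‖ := by rw [hnorm]; exact h2
      have h4 := (Complex.re_eq_norm.mp h3)
      have h5 := Complex.eq_re_of_ofReal_le h4
      rw [h5, h2]; simp
    · simp at h2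
  · intro h
    exact Finset.sum_congr rfl fun ω _ => by simp [(h ω).1, (h ω).2]

/-- The codegree of a monomial character is the index of its kernel in a point stabilizer. -/
theorem cod_monomial [Finite G] [Finite Ω] [MulAction.IsPretransitive G Ω]
    (hnorm : ∀ g ω, ‖(c g ω : ℂ)‖ = 1) (ω : Ω) :
    cod (FDRep.of (monomialRep c hc)).character =
      (monomialKer c hc).relIndex (MulAction.stabilizer G ω) := by
  have := Fintype.ofFinite Ω
  have hdeg : charDeg (FDRep.of (monomialRep c hc)).character = Nat.card Ω := by
    rw [charDeg, monomialRep_character]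
    simp [multiplier_one c hc]
  have hle : monomialKer c hc ≤ MulAction.stabilizer G ω := fun g hg => (hg ω).1
  have hidx : (MulAction.stabilizer G ω).index = Nat.card Ω := by
    rw [MulAction.index_stabilizer_of_transitive]
  have h1 := Subgroup.relIndex_mul_index hle
  have h2 := (monomialKer c hc).card_mul_index
  rw [cod, charKer_monomial c hc hnorm, hdeg]
  refine Nat.div_eq_of_eq_mul_right ?_ ?_
  · have : Nonempty Ω := ⟨ω⟩
    exact Nat.mul_pos Nat.card_pos Nat.card_pos
  · rw [← h2, ← h1, hidx]
    change _ = Nat.card (monomialKer c hc) * _ * _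
    ring

end Monomial

/-! ### Characters over an abelian normal Hall subgroup -/

section Dual

/-- A complement of an abelian normal Hall subgroup `A` gives a crossed homomorphism `Q → A`
that is the identity on `A`: the `A`-component of `g = a * h`. -/
theorem exists_crossedHom {Q : Type} [Group Q] [Finite Q] (A : Subgroup Q) [A.Normal]
    [IsMulCommutative A] (hcop : (Nat.card A).Coprime A.index) :
    ∃ κ : Q → A, (∀ a : A, κ a = a) ∧
      ∀ g g', κ (g * g') = κ g * MulAut.conjNormal g (κ g') := by
  obtain ⟨H, hH⟩ := Subgroup.exists_right_complement'_of_coprime hcop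
  have huniq : ∀ (a : A) (h : H), (hH.equiv ((a : Q) * h)).1 = a := fun a h => by
    have := hH.equiv.apply_symm_apply (a, h)
    rw [Subgroup.IsComplement.equiv_symm_apply] at this
    rw [this]
  refine ⟨fun g => (hH.equiv g).1, fun a => ?_, fun g g' => ?_⟩
  · simpa using huniq a 1
  · have hg := hH.equiv_fst_mul_equiv_snd g
    have hg' := hH.equiv_fst_mul_equiv_snd g'
    set a := (hH.equiv g).1
    set h := (hH.equiv g).2
    set a' := (hH.equiv g').1
    set h' := (hH.equiv g').2
    have hconj : MulAut.conjNormal g a' = MulAut.conjNormal (h : Q) a' := by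
      have h1 : MulAut.conjNormal (a : Q) (MulAut.conjNormal (h : Q) a') =
          MulAut.conjNormal (h : Q) a' := by
        apply Subtype.ext
        rw [MulAut.conjNormal_apply, mul_inv_eq_iff_eq_mul]
        exact congrArg Subtype.val (mul_comm' a (MulAut.conjNormal (h : Q) a'))
      rw [← h1, ← MulAut.mul_apply, ← map_mul]
      exact congrArg (fun x => MulAut.conjNormal x a') hg.symm
    have h2 : g * g' = ((a * MulAut.conjNormal g a' : A) : Q) * ((h * h' : H) : Q) := by
      rw [hconj]
      rw [Subgroup.coe_mul, MulAut.conjNormal_apply, Subgroup.coe_mul]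
      rw [← hg, ← hg']
      change (a : Q) * h * (a' * h') = a * (h * a' * (h : Q)⁻¹) * (h * h')
      group
    beta_reduce
    rw [h2, huniq]

variable {Q : Type} [Group Q] (A : Subgroup Q) [A.Normal]

/-- The conjugation action of `Q` on the linear characters of its normal subgroup `A`:
`(g • μ) a = μ (g⁻¹ * a * g)`. -/
@[reducible] def dualAction : MulAction Q (A →* ℂˣ) where
  smul g μ := μ.comp (MulAut.conjNormal g⁻¹).toMonoidHom
  one_smul μ := by
    refine MonoidHom.ext fun a => ?_
    change μ (MulAut.conjNormal (1 : Q)⁻¹ a) = μ a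
    simp
  mul_smul g h μ := by
    refine MonoidHom.ext fun a => ?_
    change μ (MulAut.conjNormal (g * h)⁻¹ a) =
      μ (MulAut.conjNormal h⁻¹ (MulAut.conjNormal g⁻¹ a))
    rw [mul_inv_rev, map_mul]; rfl

attribute [local instance] dualAction

theorem dual_smul_apply (g : Q) (μ : A →* ℂˣ) (a : A) :
    (g • μ) a = μ (MulAut.conjNormal g⁻¹ a) := rfl

theorem dual_smul_conj (g : Q) (μ : A →* ℂˣ) (a : A) :
    (g • μ) (MulAut.conjNormal g a) = μ a := by
  rw [dual_smul_apply, ← MulAut.mul_apply, ← map_mul]; simp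

theorem dual_smul_of_mem [IsMulCommutative A] (g : A) (μ : A →* ℂˣ) :
    (g : Q) • μ = μ := by
  refine MonoidHom.ext fun a => ?_
  rw [dual_smul_apply]
  congr 1
  apply Subtype.ext
  rw [MulAut.conjNormal_apply, inv_inv, mul_assoc, inv_mul_eq_iff_eq_mul]
  exact congrArg Subtype.val (mul_comm' a g)

theorem dual_smul_pow (g : Q) (μ : A →* ℂˣ) (r : ℕ) : g • μ ^ r = (g • μ) ^ r := rfl

/-- Let `A` be an abelian normal Hall subgroup of a quotient `Q` of `G`. A linear character `μ`
of `A` extends to its stabilizer, and inducing the extension gives an irreducible character whose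
codegree is divisible by `orderOf μ` and has no primes outside `|Q : A| * orderOf μ`. -/
theorem exists_irr_of_linear {G : Type} [Group G] [Finite G] [Finite Q] [IsMulCommutative A]
    (hcop : (Nat.card A).Coprime A.index) (f : G →* Q) (hf : Function.Surjective f)
    (μ : A →* ℂˣ) :
    ∃ χ : G → ℂ, IsIrrChar G χ ∧ orderOf μ ∣ cod χ ∧
      ∀ p : ℕ, p.Prime → p ∣ cod χ → p ∣ A.index * orderOf μ := by
  obtain ⟨κ, hκ, hκmul⟩ := exists_crossedHom A hcop
  let Ω := MulAction.orbit Q μ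
  let _ : MulAction G Ω := MulAction.compHom Ω f
  have hsmul : ∀ (g : G) (ω : Ω), ((g • ω : Ω) : A →* ℂˣ) = f g • (ω : A →* ℂˣ) :=
    fun _ _ => rfl
  have : MulAction.IsPretransitive G Ω := ⟨fun x y => by
    obtain ⟨q, hq⟩ := MulAction.exists_smul_eq Q x y
    obtain ⟨g, rfl⟩ := hf q
    exact ⟨g, hq⟩⟩
  have : Finite Ω := Finite.of_surjective (fun g : Q => (⟨g • μ, g, rfl⟩ : Ω)) (by
    rintro ⟨_, g, rfl⟩; exact ⟨g, rfl⟩)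
  let ω₀ : Ω := ⟨μ, MulAction.mem_orbit_self μ⟩
  have : Nonempty Ω := ⟨ω₀⟩
  let c : G → Ω → ℂˣ := fun g ω => (f g • (ω : A →* ℂˣ)) (κ (f g))
  have hc : ∀ g h ω, c (g * h) ω = c g (h • ω) * c h ω := by
    intro g h ω
    change (f (g * h) • (ω : A →* ℂˣ)) (κ (f (g * h))) =
      (f g • (f h • (ω : A →* ℂˣ))) (κ (f g)) * (f h • (ω : A →* ℂˣ)) (κ (f h))
    rw [map_mul, hκmul, map_mul, mul_smul, dual_smul_conj]
  -- An element of `A` fixes `Ω` pointwise and scales the point mass at `ω` by `ω a`.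
  have hA : ∀ (g : G) (a : A), f g = a → ∀ ω : Ω, g • ω = ω ∧ c g ω = (ω : A →* ℂˣ) a := by
    intro g a hga ω
    constructor
    · apply Subtype.ext
      rw [hsmul, hga, dual_smul_of_mem]
    · change (f g • (ω : A →* ℂˣ)) (κ (f g)) = _
      rw [hga, dual_smul_of_mem, hκ]
  have hsep : ∀ ω ω' : Ω, ω ≠ ω' → ∃ a : G, (∀ x : Ω, a • x = x) ∧ c a ω ≠ c a ω' := by
    intro ω ω' hne
    obtain ⟨a, ha⟩ : ∃ a, (ω : A →* ℂˣ) a ≠ (ω' : A →* ℂˣ) a := by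
      by_contra! h
      exact hne (Subtype.ext (MonoidHom.ext h))
    obtain ⟨g, hg⟩ := hf a
    refine ⟨g, fun x => (hA g a hg x).1, ?_⟩
    rwa [(hA g a hg ω).2, (hA g a hg ω').2]
  have hnorm : ∀ g ω, ‖(c g ω : ℂ)‖ = 1 := by
    intro g ω
    refine Complex.norm_eq_one_of_pow_eq_one (n := Nat.card A) ?_ Nat.card_pos.ne'
    rw [← Units.val_pow_eq_pow_val, ← map_pow, pow_card_eq_one', map_one, Units.val_one]
  have hcodeq := cod_monomial c hc hnorm ω₀
  refine ⟨_, ⟨_, monomialRep_simple c hc hsep, rfl⟩, ?_, ?_⟩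
  · rw [hcodeq]
    refine orderOf_dvd_of_pow_eq_one (MonoidHom.ext fun a => ?_)
    obtain ⟨g, hg⟩ := hf a
    have hst : g ∈ MulAction.stabilizer G ω₀ := (hA g a hg ω₀).1
    have hmem := (monomialKer c hc).pow_relIndex_mem hst
    set m := (monomialKer c hc).relIndex (MulAction.stabilizer G ω₀)
    have h1 := (hA (g ^ m) (a ^ m) (by rw [map_pow, hg]; rfl) ω₀).2
    rw [((mem_monomialKer c hc).mp hmem ω₀).2] at h1
    rw [MonoidHom.pow_apply, ← map_pow]
    exact h1.symm
  · intro p hp hdvd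
    have hdvd' : p ∣ Nat.card (G ⧸ monomialKer c hc) := by
      rw [hcodeq] at hdvd
      have hle : monomialKer c hc ≤ MulAction.stabilizer G ω₀ := fun g hg => (hg ω₀).1
      rw [← Subgroup.index_eq_card, ← Subgroup.relIndex_mul_index hle]
      exact hdvd.mul_right _
    have := Fact.mk hp
    obtain ⟨x, hx⟩ := exists_prime_orderOf_dvd_card' p hdvd'
    obtain ⟨x, rfl⟩ := QuotientGroup.mk_surjective x
    rw [← hx]
    refine orderOf_dvd_of_pow_eq_one ?_
    rw [← QuotientGroup.mk_pow, QuotientGroup.eq_one_iff, mem_monomialKer]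
    intro ω
    let a : A := ⟨f x ^ A.index, A.pow_index_mem (f x)⟩
    have h1 := hA (x ^ (A.index * orderOf μ)) (a ^ orderOf μ) (by
      rw [map_pow, pow_mul]; rfl) ω
    refine ⟨h1.1, h1.2.trans ?_⟩
    obtain ⟨_, g, rfl⟩ := ω
    change (g • μ) (a ^ orderOf μ) = 1
    rw [map_pow, ← MonoidHom.pow_apply, ← dual_smul_pow, pow_orderOf_eq_one]
    rfl

end Dual

/-! ### Nilpotent groups -/

/-- A finite nilpotent group has a normal subgroup of index `p` for each prime `p` dividing its
order, since it is the direct product of its Sylow subgroups. -/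
theorem exists_normal_index_prime {N : Type} [Group N] [Finite N] [Group.IsNilpotent N] {p : ℕ}
    (hp : p.Prime) (hdvd : p ∣ Nat.card N) : ∃ R : Subgroup N, R.Normal ∧ R.index = p := by
  have := Fact.mk hp
  obtain ⟨e⟩ := ((Group.isNilpotent_of_finite_tfae (G := N)).out 0 4 rfl rfl).mp ‹_›
  let P : Sylow p N := default
  let proj : N →* P :=
    ((Pi.evalMonoidHom (fun P : Sylow p N => P) P).comp (Pi.evalMonoidHom
      (fun p : (Nat.card N).primeFactors => ∀ P : Sylow p N, P)
      ⟨p, Nat.mem_primeFactors.mpr ⟨hp, hdvd, Nat.card_pos.ne'⟩⟩)).comp e.symm.toMonoidHom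
  have hproj : Function.Surjective proj := by
    refine Function.Surjective.comp (g := fun y : ∀ p : (Nat.card N).primeFactors,
      ∀ P : Sylow p N, P => y ⟨p, _⟩ P) ?_ e.symm.surjective
    exact (Function.surjective_eval P).comp (Function.surjective_eval _)
  obtain ⟨m, hm⟩ := P.isPGroup'.exists_card_eq
  have hm0 : m ≠ 0 := by
    rintro rfl
    have := P.dvd_card_of_dvd_card hdvd
    rw [hm] at this
    exact hp.one_lt.ne' (Nat.dvd_one.mp this)
  obtain ⟨m, rfl⟩ := Nat.exists_eq_succ_of_ne_zero hm0
  obtain ⟨R, hR⟩ := Sylow.exists_subgroup_card_pow_prime (G := P) p (n := m)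
    (by rw [hm]; exact pow_dvd_pow _ (Nat.le_succ m))
  have hidx : R.index = p := by
    have h := R.card_mul_index
    rw [hR, hm, pow_succ] at h
    exact Nat.eq_of_mul_eq_mul_left (pow_pos hp.pos m) h
  have hRn : R.Normal := Subgroup.normal_of_index_eq_minFac_card (by
    rw [hidx, hm, hp.pow_minFac hm0])
  exact ⟨R.comap proj, inferInstance, by rw [Subgroup.index_comap_of_surjective _ hproj, hidx]⟩

/-! ### Codegrees with prescribed primes -/

/-- If `K / L` is nilpotent, `p` divides `|K / L|` and `p ∣ n`, then the quotient of `K` by its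
subgroup generated by `L`, commutators and `n`-th powers still has order divisible by `p`. -/
theorem dvd_relIndex_of_nilpotent {G : Type} [Group G] [Finite G] (L K : Subgroup G) [L.Normal]
    [K.Normal] (hLK : L ≤ K) (hnil : Group.IsNilpotent (K ⧸ L.subgroupOf K)) {p n : ℕ}
    (hp : p.Prime) (hdvd : p ∣ Nat.card (K ⧸ L.subgroupOf K)) (hpn : p ∣ n) :
    p ∣ (L ⊔ ⁅K, K⁆ ⊔ Subgroup.closure ((· ^ n) '' (K : Set G))).relIndex K := by
  obtain ⟨R, hRn, hRi⟩ := exists_normal_index_prime hp hdvd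
  have := Fact.mk hp
  let ψ : K →* (K ⧸ L.subgroupOf K) ⧸ R :=
    (QuotientGroup.mk' R).comp (QuotientGroup.mk' (L.subgroupOf K))
  have hψ : Function.Surjective ψ :=
    (QuotientGroup.mk'_surjective _).comp (QuotientGroup.mk'_surjective _)
  have hcard : Nat.card ((K ⧸ L.subgroupOf K) ⧸ R) = p := by
    rw [← Subgroup.index_eq_card, hRi]
  have : IsCyclic ((K ⧸ L.subgroupOf K) ⧸ R) := isCyclic_of_prime_card hcard
  have hcomm : ∀ x y : (K ⧸ L.subgroupOf K) ⧸ R, x * y = y * x := fun x y => mul_comm' x y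
  have hpow : ∀ x : (K ⧸ L.subgroupOf K) ⧸ R, x ^ n = 1 := fun x => by
    obtain ⟨m, rfl⟩ := hpn
    rw [pow_mul, ← hcard, pow_card_eq_one', one_pow]
  have hM : L ⊔ ⁅K, K⁆ ⊔ Subgroup.closure ((· ^ n) '' (K : Set G)) ≤ ψ.ker.map K.subtype := by
    refine sup_le (sup_le ?_ ?_) ?_
    · intro x hx
      refine ⟨⟨x, hLK hx⟩, ?_, rfl⟩
      change QuotientGroup.mk' R (QuotientGroup.mk' (L.subgroupOf K) ⟨x, hLK hx⟩) = 1
      have : QuotientGroup.mk' (L.subgroupOf K) ⟨x, hLK hx⟩ = 1 :=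
        (QuotientGroup.eq_one_iff _).mpr hx
      rw [this, map_one]
    · rw [Subgroup.commutator_le]
      intro x hx y hy
      refine ⟨⟨x, hx⟩ * ⟨y, hy⟩ * ⟨x, hx⟩⁻¹ * ⟨y, hy⟩⁻¹, ?_, rfl⟩
      rw [SetLike.mem_coe, MonoidHom.mem_ker, map_mul, map_mul, map_mul, map_inv, map_inv,
        hcomm (ψ ⟨x, hx⟩), mul_inv_cancel_right, mul_inv_cancel]
    · rw [Subgroup.closure_le]
      rintro _ ⟨x, hx, rfl⟩
      refine ⟨⟨x, hx⟩ ^ n, ?_, rfl⟩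
      rw [SetLike.mem_coe, MonoidHom.mem_ker, map_pow, hpow]
  have h1 : (ψ.ker.map K.subtype).relIndex K = p := by
    rw [Subgroup.relIndex, Subgroup.subgroupOf,
      Subgroup.comap_map_eq_self_of_injective K.subtype_injective, Subgroup.index_ker,
      MonoidHom.range_eq_top.mpr hψ, Subgroup.card_top, hcard]
  rw [← h1]
  exact Subgroup.relIndex_dvd_of_le_left K hM

/-- For every set `J` of primes in `π(K/L) \ π(G/K)` some codegree is divisible, among the primes
in `π(K/L) \ π(G/K)`, exactly by those in `J`. -/
theorem exists_cod_of_subset {G : Type} [Group G] [Finite G] (L K : Subgroup G) [L.Normal]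
    [K.Normal] (hLK : L ≤ K) (hnil : Group.IsNilpotent (K ⧸ L.subgroupOf K)) (J : Finset ℕ)
    (hJ : J ⊆ (Nat.card (K ⧸ L.subgroupOf K)).primeFactors \ (Nat.card (G ⧸ K)).primeFactors) :
    ∃ n ∈ codSet G, ∀ p ∈ (Nat.card (K ⧸ L.subgroupOf K)).primeFactors \
      (Nat.card (G ⧸ K)).primeFactors, p ∣ n ↔ p ∈ J := by
  set π := (Nat.card (K ⧸ L.subgroupOf K)).primeFactors \ (Nat.card (G ⧸ K)).primeFactors with hπ
  have hπp : ∀ p ∈ π, p.Prime := fun p hp =>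
    Nat.prime_of_mem_primeFactors (Finset.mem_sdiff.mp hp).1
  have hπK : ∀ p ∈ π, p ∣ Nat.card (K ⧸ L.subgroupOf K) := fun p hp =>
    Nat.dvd_of_mem_primeFactors (Finset.mem_sdiff.mp hp).1
  have hπG : ∀ p ∈ π, ¬ p ∣ K.index := fun p hp h => (Finset.mem_sdiff.mp hp).2
    (Nat.mem_primeFactors.mpr ⟨hπp p hp, by rwa [← Subgroup.index_eq_card], Nat.card_pos.ne'⟩)
  let n := ∏ p ∈ π, p
  have hn0 : n ≠ 0 := Finset.prod_ne_zero_iff.mpr fun p hp => (hπp p hp).ne_zero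
  have hpn : ∀ p ∈ π, p ∣ n := fun p hp => Finset.dvd_prod_of_mem _ hp
  have hdvdprod : ∀ (S : Finset ℕ), S ⊆ π → ∀ p, p.Prime → p ∣ ∏ q ∈ S, q → p ∈ S := by
    intro S hS p hp h
    obtain ⟨q, hq, hpq⟩ := (Prime.dvd_finsetProd_iff hp.prime _).mp h
    rwa [(Nat.prime_dvd_prime_iff_eq hp (hπp q (hS hq))).mp hpq]
  let C := Subgroup.closure ((· ^ n) '' (K : Set G))
  have hC : C.Normal := by
    refine ⟨fun x hx g => ?_⟩
    change MulAut.conj g x ∈ C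
    suffices h : C ≤ C.comap (MulAut.conj g).toMonoidHom from h hx
    refine (Subgroup.closure_le _).mpr ?_
    rintro _ ⟨y, hy, rfl⟩
    refine Subgroup.subset_closure ⟨MulAut.conj g y, ‹K.Normal›.conj_mem y hy g, ?_⟩
    exact (map_pow (MulAut.conj g) y n).symm
  -- `K / M` is abelian of exponent dividing `n`, so it only involves primes of `π`, and it is a
  -- Hall subgroup of `G / M`.
  let M := L ⊔ ⁅K, K⁆ ⊔ C
  have hMn : M.Normal := inferInstance
  have hMK : M ≤ K := by
    refine sup_le (sup_le hLK ?_) ?_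
    · rw [Subgroup.commutator_le]
      intro x hx y hy
      exact K.mul_mem (K.mul_mem (K.mul_mem hx hy) (K.inv_mem hx)) (K.inv_mem hy)
    · rw [Subgroup.closure_le]
      rintro _ ⟨x, hx, rfl⟩
      exact K.pow_mem hx n
  let f := QuotientGroup.mk' M
  have hf : Function.Surjective f := QuotientGroup.mk'_surjective M
  have hker : f.ker = M := QuotientGroup.ker_mk' M
  let A := K.map f
  have hAn : A.Normal := ‹K.Normal›.map f hf
  have hAidx : A.index = K.index := by
    rw [Subgroup.index_map, hker, sup_eq_left.mpr hMK, MonoidHom.range_eq_top.mpr hf,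
      Subgroup.index_top, mul_one]
  have hAcard : Nat.card A = M.relIndex K := by
    conv_rhs => rw [← hker, Subgroup.relIndex_ker]
  have hAcomm : IsMulCommutative A := by
    refine ⟨⟨?_⟩⟩
    rintro ⟨_, x, hx, rfl⟩ ⟨_, y, hy, rfl⟩
    apply Subtype.ext
    change f x * f y = f y * f x
    rw [← commutatorElement_eq_one_iff_mul_comm, ← map_commutatorElement, ← MonoidHom.mem_ker, hker]
    exact le_sup_left (a := L ⊔ ⁅K, K⁆) (le_sup_right (a := L)
      (Subgroup.commutator_mem_commutator hx hy))
  have hApow : ∀ a : A, a ^ n = 1 := by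
    rintro ⟨_, x, hx, rfl⟩
    apply Subtype.ext
    change f x ^ n = 1
    rw [← map_pow, ← MonoidHom.mem_ker, hker]
    exact le_sup_right (a := L ⊔ ⁅K, K⁆) (Subgroup.subset_closure ⟨x, hx, rfl⟩)
  have hcop : (Nat.card A).Coprime A.index := by
    refine Nat.Coprime.symm (Nat.coprime_of_dvd fun q hq h2 h1 => ?_)
    have := Fact.mk hq
    obtain ⟨a, ha⟩ := exists_prime_orderOf_dvd_card' q h1
    have hqn : q ∣ n := ha ▸ orderOf_dvd_of_pow_eq_one (hApow a)
    exact hπG q (hdvdprod π subset_rfl q hq hqn) (hAidx ▸ h2)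
  -- The dual of `K / M` has the same order as `K / M`, and an element of order exactly `n`.
  let _ : CommGroup A := { (inferInstance : Group A) with mul_comm := mul_comm' }
  have hDcard : Nat.card (A →* ℂˣ) = Nat.card A :=
    CommGroup.card_monoidHom_of_hasEnoughRootsOfUnity A ℂ
  have hDfin : Finite (A →* ℂˣ) := Nat.finite_of_card_ne_zero (hDcard ▸ Nat.card_pos.ne')
  obtain ⟨μ, hμ⟩ := Monoid.exists_orderOf_eq_exponent
    (Monoid.ExponentExists.of_finite (G := A →* ℂˣ))
  have hμn : orderOf μ = n := by
    refine Nat.dvd_antisymm (orderOf_dvd_of_pow_eq_one (MonoidHom.ext fun a => ?_)) ?_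
    · rw [MonoidHom.pow_apply, ← map_pow, hApow, map_one, MonoidHom.one_apply]
    · refine Finset.prod_primes_dvd _ (fun p hp => (hπp p hp).prime) fun p hp => ?_
      have := Fact.mk (hπp p hp)
      have h1 : p ∣ Nat.card (A →* ℂˣ) := by
        rw [hDcard, hAcard]
        exact dvd_relIndex_of_nilpotent L K hLK hnil (hπp p hp) (hπK p hp) (hpn p hp)
      obtain ⟨ν, hν⟩ := exists_prime_orderOf_dvd_card' p h1
      rw [hμ, ← hν]
      exact Monoid.order_dvd_exponent ν
  have hsplit : n = (∏ p ∈ π \ J, p) * ∏ p ∈ J, p := (Finset.prod_sdiff hJ).symm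
  have hμJ : orderOf (μ ^ ∏ p ∈ π \ J, p) = ∏ p ∈ J, p := by
    have h0 : ∏ p ∈ π \ J, p ≠ 0 := left_ne_zero_of_mul (hsplit ▸ hn0)
    rw [orderOf_pow_of_dvd h0 (by rw [hμn, hsplit]; exact dvd_mul_right _ _), hμn, hsplit,
      Nat.mul_div_cancel_left _ (Nat.pos_of_ne_zero h0)]
  obtain ⟨χ, hχ, h1, h2⟩ := exists_irr_of_linear A hcop f hf (μ ^ ∏ p ∈ π \ J, p)
  rw [hμJ] at h1 h2
  refine ⟨cod χ, ⟨χ, hχ, rfl⟩, fun p hp => ⟨fun h => ?_, fun h => ?_⟩⟩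
  · refine hdvdprod J hJ p (hπp p hp) (((hπp p hp).dvd_mul.mp (h2 p (hπp p hp) h)).resolve_left ?_)
    rw [hAidx]
    exact hπG p hp
  · exact (Finset.dvd_prod_of_mem _ h).trans h1

/-- **Lemma 2.3.** If every prime divides at most `k` character codegrees of `G`, and
`L ≤ K` are normal subgroups of `G` with `K/L` nilpotent, then at most `k` primes divide
`|K/L|` but not `|G/K|`. -/
theorem lemNew (k : ℕ) (G : Type) [Group G] [Finite G]
    (hcod : ∀ p : ℕ, p.Prime → (codSetP G p).ncard ≤ k)
    (L K : Subgroup G) [L.Normal] [K.Normal] (hLK : L ≤ K)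
    (hnil : Group.IsNilpotent (K ⧸ L.subgroupOf K)) :
    ((Nat.card (K ⧸ L.subgroupOf K)).primeFactors \
        (Nat.card (G ⧸ K)).primeFactors).card ≤ k := by
  set π := (Nat.card (K ⧸ L.subgroupOf K)).primeFactors \ (Nat.card (G ⧸ K)).primeFactors
  rcases π.eq_empty_or_nonempty with h0 | hne
  · simp [h0]
  -- The initial segments of `π` form a chain of sets of primes, all containing `q = min π`, so
  -- the matching codegrees are distinct multiples of `q`.
  let q := π.min' hne
  have hq : q ∈ π := π.min'_mem hne
  choose! c hc hcdvd using fun p (_ : p ∈ π) =>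
    exists_cod_of_subset L K hLK hnil (π.filter (· ≤ p)) (Finset.filter_subset _ _)
  have hfin : (codSetP G q).Finite := by
    refine (Set.finite_Iic (Nat.card G)).subset ?_
    rintro _ ⟨⟨χ, _, rfl⟩, _⟩
    exact Nat.div_le_self _ _
  refine le_trans ?_ (hcod q (Nat.prime_of_mem_primeFactors (Finset.mem_sdiff.mp hq).1))
  rw [← Set.ncard_coe_finset]
  refine Set.ncard_le_ncard_of_injOn c (fun p hp => ⟨hc p hp, ?_⟩) ?_ hfin
  · exact (hcdvd p hp q hq).mpr (Finset.mem_filter.mpr ⟨hq, π.min'_le p hp⟩)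
  · have key : ∀ p ∈ π, ∀ p' ∈ π, c p = c p' → p ≤ p' := fun p hp p' hp' h =>
      (Finset.mem_filter.mp ((hcdvd p' hp' p hp).mp
        (h ▸ (hcdvd p hp p hp).mpr (Finset.mem_filter.mpr ⟨hp, le_rfl⟩)))).2
    exact fun p hp p' hp' h => le_antisymm (key p hp p' hp' h) (key p' hp' p hp h.symm)
end Codegree
end
end

section
/- Let G be a finite group, let N be a normal subgroup of G, let θ ∈ Irr(N), and let χ ∈ Irr(G) lie over θ (i.e., θ is an irreducible constituent of the restriction of χ to N). Then cod(θ) divides cod(χ). -/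
/-!
Let `χ` be afforded by `ρ` on `V` and `θ` by `η` on `W`, and put `K = ker χ`, `L = ker θ`. The heart
of the matter is the divisibility `card_mul_finrank_dvd`:

  `|N K| χ(1)` divides `|G| θ(1)`.

It implies the theorem. Indeed, `N = 1` gives that `|K| χ(1)` divides `|G|`, so that codegrees are
exact quotients, and `N ∩ K ≤ L` because `W` embeds in the restriction of `V`. Hence
`cod χ / cod θ = (|G| / (|K| χ(1))) * (|L| θ(1) / |N|)`, and since `|N K| |N ∩ K| = |N| |K|` this is the
product of the two integers `|G| θ(1) / (|N K| χ(1))` and `|L| / |N ∩ K|`.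

The key divisibility refines the classical argument that character degrees divide the group order.
The space `Hom_N(W, V)` (`homSpace`) carries a projective representation of the inertia group of `θ`,
which is linearised by passing to the group `lifts` of pairs `(g, A)`, where `A` is an automorphism of
`W` of determinant `1` that intertwines `η` with its conjugate by `g`. These lifts act with finite
order (`liftRep_pow`), so their traces are algebraic integers. The operator `tr(γ⁻¹) γ` depends only
on the element `g` below the lift `γ` (`twistSummand`), and in fact only on its coset modulo `N K`.
Schur's lemma for `ρ` and the perfect pairing between `Hom_N(V, W)` and `Hom_N(W, V)` show that the
sum of these operators over `G` is the scalar `|G| θ(1) / χ(1)` (`sum_twistSummand`). Summing over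
cosets instead, the scalar `|G| θ(1) / (|N K| χ(1))` preserves a nonzero finitely generated module over
the algebraic integers, so it is an algebraic integer (`isIntegral_ratio`); being rational, it is an
integer.
-/

open scoped Classical

noncomputable section

namespace Codegree

open Module

/-! ### Irreducible representations and Schur's lemma -/

section
variable {G V W : Type} [Group G] [AddCommGroup V] [Module ℂ V] [AddCommGroup W] [Module ℂ W]

/-- Irreducibility as a statement about invariant subspaces: the space is nonzero and has no proper
nonzero subspace stable under the group. -/
def IsIrrRep (ρ : Representation ℂ G V) : Prop :=
  Nontrivial V ∧ ∀ p : Submodule ℂ V, (∀ g, ∀ x ∈ p, ρ g x ∈ p) → p = ⊥ ∨ p = ⊤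

/-- Schur's lemma: an endomorphism commuting with an irreducible representation is a scalar. -/
theorem IsIrrRep.exists_scalar [FiniteDimensional ℂ V] {ρ : Representation ℂ G V}
    (hρ : IsIrrRep ρ) (A : V →ₗ[ℂ] V) (hA : ∀ g x, A (ρ g x) = ρ g (A x)) :
    ∃ c : ℂ, A = c • LinearMap.id := by
  have := hρ.1
  obtain ⟨c, hc⟩ := Module.End.exists_eigenvalue A
  refine ⟨c, ?_⟩
  rcases hρ.2 (Module.End.eigenspace A c) (fun g x hx => by
    rw [Module.End.mem_eigenspace_iff] at hx ⊢
    rw [hA, hx, map_smul]) with h | h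
  · exact absurd h hc
  · ext x
    have : x ∈ Module.End.eigenspace A c := h ▸ Submodule.mem_top
    simpa using Module.End.mem_eigenspace_iff.1 this

/-- A nonzero map out of an irreducible representation is injective as soon as it intertwines the
action with *some* family of operators. No multiplicativity of `B` is needed, so the lemma also
applies to twisted intertwiners. -/
theorem IsIrrRep.injective {ρ : Representation ℂ G V}
    (hρ : IsIrrRep ρ) (f : V →ₗ[ℂ] W) (B : G → W →ₗ[ℂ] W) (hf : ∀ g x, f (ρ g x) = B g (f x))
    (h0 : f ≠ 0) : Function.Injective f := by
  rw [← LinearMap.ker_eq_bot]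
  refine (hρ.2 (LinearMap.ker f) fun g x hx => ?_).resolve_right fun h =>
    h0 (LinearMap.ker_eq_top.1 h)
  rw [LinearMap.mem_ker] at hx ⊢
  rw [hf, hx, map_zero]

/-- The unnormalised average `∑ g, σ g ∘ π ∘ ρ g⁻¹` of a linear map `π`; it intertwines `ρ` and `σ`. -/
def average [Fintype G] (ρ : Representation ℂ G V) (σ : Representation ℂ G W) (π : V →ₗ[ℂ] W) :
    V →ₗ[ℂ] W := ∑ g : G, σ g ∘ₗ π ∘ₗ ρ g⁻¹

theorem average_equivariant [Fintype G] (ρ : Representation ℂ G V) (σ : Representation ℂ G W)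
    (π : V →ₗ[ℂ] W) (g : G) (x : V) : average ρ σ π (ρ g x) = σ g (average ρ σ π x) := by
  simp only [average, LinearMap.sum_apply, LinearMap.comp_apply, map_sum]
  rw [← Equiv.sum_comp (Equiv.mulLeft g)]
  refine Finset.sum_congr rfl fun h _ => ?_
  simp only [Equiv.coe_mulLeft, map_mul, mul_inv_rev, Module.End.mul_apply]
  rw [← Module.End.mul_apply (ρ g⁻¹) (ρ g), ← map_mul, inv_mul_cancel, map_one,
    Module.End.one_apply]

/-- Categorical simplicity gives irreducibility. First orthogonality says that the intertwining
algebra of `V` has dimension one, and averaging a projection onto an invariant subspace `p` gives an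
intertwiner `E` with image in `p` which is `|G|` on `p`. As `E` is a scalar, `p` is `⊥` or `⊤`. -/
theorem isIrrRep_of_simple {G : Type} [Group G] [Fintype G] (V : FDRep ℂ G)
    (hV : CategoryTheory.Simple V) : IsIrrRep (V.ρ : Representation ℂ G V) := by
  have hG : (Nat.card G : ℂ) ≠ 0 := by exact_mod_cast Nat.card_pos.ne'
  let _ := invertibleOfNonzero hG
  have h1 : finrank ℂ (Representation.IntertwiningMap
      (V.ρ : Representation ℂ G V) (V.ρ : Representation ℂ G V)) = 1 := by
    have h := FDRep.char_orthonormal V V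
    rw [if_pos ⟨CategoryTheory.Iso.refl _⟩] at h
    have h' := Representation.card_inv_mul_sum_char_mul_char_eq_finrank
      (V.ρ : Representation ℂ G V) (V.ρ : Representation ℂ G V)
    have := h'.symm.trans h
    exact_mod_cast this
  have hnt : Nontrivial V := by
    by_contra hV
    rw [not_nontrivial_iff_subsingleton] at hV
    have : Subsingleton (Representation.IntertwiningMap
      (V.ρ : Representation ℂ G V) (V.ρ : Representation ℂ G V)) :=
      ⟨fun a b => by ext x; exact Subsingleton.elim _ _⟩
    rw [finrank_zero_of_subsingleton] at h1
    exact zero_ne_one h1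
  refine ⟨hnt, fun p hp => ?_⟩
  obtain ⟨q, hq⟩ := LinearMap.exists_leftInverse_of_injective p.subtype p.ker_subtype
  have hq' : ∀ x ∈ p, (q x : V) = x := fun x hx => by
    have := LinearMap.congr_fun hq ⟨x, hx⟩
    simpa using congrArg Subtype.val this
  let E := average (V.ρ : Representation ℂ G V) V.ρ (p.subtype ∘ₗ q)
  have hEmem : ∀ x, E x ∈ p := fun x => by
    simp only [E, average, LinearMap.sum_apply, LinearMap.comp_apply]
    exact Submodule.sum_mem _ fun g _ => hp g _ (Submodule.coe_mem _)
  have hEp : ∀ x ∈ p, E x = (Nat.card G : ℂ) • x := fun x hx => by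
    simp only [E, average, LinearMap.sum_apply, LinearMap.comp_apply, Submodule.subtype_apply]
    rw [Finset.sum_congr rfl (g := fun _ => x)]
    · simp [Nat.cast_smul_eq_nsmul]
    · intro g _
      rw [hq' _ (hp _ _ hx), ← Module.End.mul_apply, ← map_mul, mul_inv_cancel, map_one,
        Module.End.one_apply]
  let E' : Representation.IntertwiningMap (V.ρ : Representation ℂ G V) V.ρ :=
    ⟨E, fun g => by ext x; exact average_equivariant _ _ _ g x⟩
  obtain ⟨x0, hx0⟩ := exists_ne (0 : V)
  obtain ⟨c, hc⟩ := (finrank_eq_one_iff_of_nonzero'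
    (1 : Representation.IntertwiningMap (V.ρ : Representation ℂ G V) V.ρ) (fun h => hx0 (by
      have := congrArg (fun f => f x0) h
      simpa using this))).1 h1 E'
  have hcx : ∀ x, c • x = E x := fun x => by
    have h : c • x = E' x := by simpa using congrArg (fun f => f x) hc
    exact h
  by_cases hc0 : c = 0
  · left
    rw [Submodule.eq_bot_iff]
    intro x hx
    have := hcx x
    rw [hEp x hx, hc0, zero_smul] at this
    exact (smul_eq_zero.1 this.symm).resolve_left hG
  · right
    rw [Submodule.eq_top_iff']
    intro x
    have : x = c⁻¹ • E x := by rw [← hcx, smul_smul, inv_mul_cancel₀ hc0, one_smul]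
    rw [this]
    exact p.smul_mem _ (hEmem x)
end



/-! ### Operators of finite order -/

/-- An operator of finite order has a basis of eigenvectors, with roots of unity as eigenvalues. -/
theorem exists_eigenbasis {V : Type*} [AddCommGroup V] [Module ℂ V] [FiniteDimensional ℂ V]
    (A : End ℂ V) {k : ℕ} (hk : 0 < k) (hA : A ^ k = 1) :
    ∃ (μ : Fin (finrank ℂ V) → ℂ) (b : Basis (Fin (finrank ℂ V)) ℂ V),
      (∀ i, A (b i) = μ i • b i) ∧ ∀ i, μ i ^ k = 1 := by
  classical
  have hss : A.IsSemisimple := by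
    refine Module.End.isSemisimple_of_squarefree_aeval_eq_zero
      (p := Polynomial.X ^ k - Polynomial.C (1 : ℂ)) ?_ ?_
    · exact (Polynomial.separable_X_pow_sub_C 1 (by exact_mod_cast hk.ne') one_ne_zero).squarefree
    · simp [hA]
  have htop : ⨆ μ : ℂ, A.eigenspace μ = ⊤ := by
    rw [← Module.End.iSup_maxGenEigenspace_eq_top A]
    exact iSup_congr fun μ =>
      (hss.isFinitelySemisimple.maxGenEigenspace_eq_eigenspace μ).symm
  have hint : DirectSum.IsInternal (fun μ : ℂ => A.eigenspace μ) :=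
    DirectSum.isInternal_submodule_of_iSupIndep_of_iSup_eq_top A.eigenspaces_iSupIndep htop
  let b0 := hint.collectedBasis (fun μ => Module.finBasis ℂ (A.eigenspace μ))
  let e := b0.indexEquiv (Module.finBasis ℂ V)
  have hev : ∀ i, A (b0 i) = i.1 • b0 i := fun i =>
    Module.End.mem_eigenspace_iff.1 (hint.collectedBasis_mem _ i)
  refine ⟨fun i => (e.symm i).1, b0.reindex e, fun i => by simpa using hev _, fun i => ?_⟩
  have hp : ∀ n : ℕ, (A ^ n) (b0 (e.symm i)) = (e.symm i).1 ^ n • b0 (e.symm i) := by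
    intro n
    induction n with
    | zero => simp
    | succ n ih => rw [pow_succ', Module.End.mul_apply, ih, map_smul, hev, smul_smul, pow_succ]
  have h := hp k
  rw [hA, Module.End.one_apply] at h
  have h2 : ((e.symm i).1 ^ k - 1) • b0 (e.symm i) = 0 := by rw [sub_smul, ← h, one_smul, sub_self]
  rcases smul_eq_zero.1 h2 with h3 | h3
  · exact sub_eq_zero.1 h3
  · exact absurd h3 (b0.ne_zero _)

theorem trace_of_eigenbasis {V ι : Type*} [AddCommGroup V] [Module ℂ V] [Fintype ι] [DecidableEq ι]
    (A : End ℂ V) (μ : ι → ℂ) (b : Basis ι ℂ V) (h : ∀ i, A (b i) = μ i • b i) :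
    LinearMap.trace ℂ V A = ∑ i, μ i := by
  rw [LinearMap.trace_eq_matrix_trace ℂ b, Matrix.trace]
  simp [LinearMap.toMatrix_apply, h]

theorem isIntegral_trace_of_pow_eq_one_s9 {V : Type*} [AddCommGroup V] [Module ℂ V]
    [FiniteDimensional ℂ V] (A : End ℂ V) {k : ℕ} (hk : 0 < k) (hA : A ^ k = 1) :
    IsIntegral ℤ (LinearMap.trace ℂ V A) := by
  obtain ⟨μ, b, h, hμ⟩ := exists_eigenbasis A hk hA
  rw [trace_of_eigenbasis A μ b h]
  exact IsIntegral.sum _ fun i _ => IsIntegral.of_pow hk (by rw [hμ]; exact isIntegral_one)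

/-- The equality case of `|tr A| ≤ dim V`: eigenvalues on the unit circle with sum `dim V` are
all `1`. This identifies the kernel of a character with the kernel of its representation. -/
theorem eq_one_of_trace_eq_s9 {V : Type*} [AddCommGroup V] [Module ℂ V]
    [FiniteDimensional ℂ V] (A : End ℂ V) {k : ℕ} (hk : 0 < k) (hA : A ^ k = 1)
    (ht : LinearMap.trace ℂ V A = finrank ℂ V) : A = 1 := by
  obtain ⟨μ, b, h, hμ⟩ := exists_eigenbasis A hk hA
  rw [trace_of_eigenbasis A μ b h] at ht
  have hn : ∀ i, ‖μ i‖ = 1 := fun i => Complex.norm_eq_one_of_pow_eq_one (hμ i) hk.ne'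
  have hre : ∑ i, (1 - (μ i).re) = 0 := by
    have := congrArg Complex.re ht
    simp only [Complex.re_sum, Complex.natCast_re] at this
    simp [this]
  have h1 : ∀ i, (μ i).re = 1 := by
    have := (Finset.sum_eq_zero_iff_of_nonneg (fun i _ => by
      have := Complex.re_le_norm (μ i); rw [hn] at this; linarith)).1 hre
    intro i; have := this i (Finset.mem_univ _); linarith
  refine b.ext fun i => ?_
  rw [h, Module.End.one_apply]
  have : μ i = 1 := by
    have h2 : (μ i).im = 0 := by
      have := Complex.sq_norm (μ i)
      rw [hn, Complex.normSq_apply, h1] at this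
      nlinarith
    exact Complex.ext (h1 i) h2
  rw [this, one_smul]

/-- The inverse of an operator of finite order has the conjugate trace. -/
theorem trace_conj_of_pow_eq_one {V : Type*} [AddCommGroup V] [Module ℂ V]
    [FiniteDimensional ℂ V] (A B : End ℂ V) {k : ℕ} (hk : 0 < k) (hA : A ^ k = 1)
    (hB : B * A = 1) : LinearMap.trace ℂ V B = starRingEnd ℂ (LinearMap.trace ℂ V A) := by
  obtain ⟨μ, b, h, hμ⟩ := exists_eigenbasis A hk hA
  have hn : ∀ i, ‖μ i‖ = 1 := fun i => Complex.norm_eq_one_of_pow_eq_one (hμ i) hk.ne'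
  have h0 : ∀ i, μ i ≠ 0 := fun i h => by have := hn i; simp [h] at this
  rw [trace_of_eigenbasis A μ b h, trace_of_eigenbasis B (fun i => (μ i)⁻¹) b, map_sum]
  · exact Finset.sum_congr rfl fun i _ => Complex.inv_eq_conj (hn i)
  · intro i
    have h2 : B (A (b i)) = b i := by rw [← Module.End.mul_apply, hB, Module.End.one_apply]
    rw [h, map_smul] at h2
    rw [← h2, smul_smul, inv_mul_cancel₀ (h0 i), one_smul, h2]

/-! ### The multiplicity space and the group of lifts -/

section Multiplicity
variable {G V W : Type} [Group G] [AddCommGroup V] [Module ℂ V] [AddCommGroup W] [Module ℂ W]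
  {N : Subgroup G} [N.Normal]

/-- The multiplicity space `Hom_N(W, V)`: linear maps intertwining `η` with the restriction of `ρ`
to `N`. -/
def homSpace (ρ : Representation ℂ G V) (η : Representation ℂ N W) : Submodule ℂ (W →ₗ[ℂ] V) where
  carrier := {f | ∀ (n : N) (w : W), f (η n w) = ρ n (f w)}
  add_mem' ha hb n w := by simp [ha n w, hb n w]
  zero_mem' n w := by simp
  smul_mem' c f hf n w := by simp [hf n w]

/-- The space `Hom_N(V, W)`, which is dual to `homSpace ρ η`; see `pairing`. -/
def homSpace' (ρ : Representation ℂ G V) (η : Representation ℂ N W) : Submodule ℂ (V →ₗ[ℂ] W) where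
  carrier := {φ | ∀ (n : N) (v : V), φ (ρ n v) = η n (φ v)}
  add_mem' ha hb n w := by simp [ha n w, hb n w]
  zero_mem' n w := by simp
  smul_mem' c f hf n w := by simp [hf n w]

/-- The group of pairs `(g, A)` with `A` an automorphism of `W` of determinant `1` satisfying
`A (η n w) = η (g n g⁻¹) (A w)`. For `η` irreducible it is a central extension, by the `dim W`-th
roots of unity, of the inertia group of `η`. Normalising the determinant keeps it finite, hence
keeps all its traces integral. -/
def lifts (η : Representation ℂ N W) : Subgroup (G × (W ≃ₗ[ℂ] W)) where
  carrier := {γ | LinearMap.det (γ.2 : W →ₗ[ℂ] W) = 1 ∧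
    ∀ (n : N) (w : W), γ.2 (η n w) = η (MulAut.conjNormal γ.1 n) (γ.2 w)}
  mul_mem' {a b} ha hb := by
    refine ⟨?_, fun n w => ?_⟩
    · have : ((a * b).2 : W →ₗ[ℂ] W) = (a.2 : W →ₗ[ℂ] W) * (b.2 : W →ₗ[ℂ] W) := rfl
      rw [this, map_mul, ha.1, hb.1, one_mul]
    · simp only [Prod.snd_mul, Prod.fst_mul, LinearEquiv.mul_apply, map_mul, MulAut.mul_apply]
      rw [hb.2, ha.2]
  one_mem' := ⟨LinearMap.det_id, fun n w => by simp⟩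
  inv_mem' {a} ha := by
    refine ⟨?_, fun n w => ?_⟩
    · have h := LinearEquiv.det_symm_mul_det a.2
      rwa [ha.1, mul_one] at h
    · change a.2.symm (η n w) = η (MulAut.conjNormal a.1⁻¹ n) (a.2.symm w)
      rw [LinearEquiv.symm_apply_eq, ha.2, map_inv, MulAut.apply_inv_self,
        LinearEquiv.apply_symm_apply]

variable (ρ : Representation ℂ G V) (η : Representation ℂ N W)

theorem rep_mul_apply {G V : Type} [Group G] [AddCommGroup V] [Module ℂ V]
    (ρ : Representation ℂ G V) (g h : G) (v : V) : ρ (g * h) v = ρ g (ρ h v) := by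
  rw [map_mul, Module.End.mul_apply]

/-- The action of the lifts on the multiplicity space: `(g, A)` sends `f` to `ρ g ∘ f ∘ A⁻¹`. -/
def liftRep : Representation ℂ (lifts η) (homSpace ρ η) where
  toFun γ :=
    { toFun := fun f => ⟨ρ γ.1.1 ∘ₗ f.1 ∘ₗ (γ.1.2⁻¹ : W ≃ₗ[ℂ] W).toLinearMap, fun n w => by
        have h := (γ⁻¹).2.2 n w
        simp only [LinearMap.comp_apply]
        change ρ γ.1.1 (f.1 (γ.1.2⁻¹ (η n w))) = _
        change γ.1.2⁻¹ (η n w) = η (MulAut.conjNormal γ.1.1⁻¹ n) (γ.1.2⁻¹ w) at h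
        rw [h, f.2, ← rep_mul_apply, ← rep_mul_apply]
        simp [mul_assoc]⟩
      map_add' := fun f f' => by ext; simp
      map_smul' := fun c f => by ext; simp }
  map_one' := by ext; simp
  map_mul' γ δ := by
    ext f w
    simp only [Subgroup.coe_mul, Prod.fst_mul, Prod.snd_mul, map_mul, mul_inv_rev]
    rfl

theorem liftRep_apply (γ : lifts η) (f : homSpace ρ η) (w : W) :
    (liftRep ρ η γ f).1 w = ρ γ.1.1 (f.1 (γ.1.2⁻¹ w)) := rfl

variable {ρ η}

/-- By Schur's lemma two lifts of the same group element differ by a scalar, which is a root of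
unity because both have determinant `1`. -/
theorem lifts_eq_smul [FiniteDimensional ℂ W] (hη : IsIrrRep η) (γ δ : lifts η)
    (h : γ.1.1 = δ.1.1) : ∃ c : ℂ, c ^ finrank ℂ W = 1 ∧ liftRep ρ η γ = c • liftRep ρ η δ := by
  obtain ⟨c, hc⟩ := hη.exists_scalar (γ.1.2⁻¹ * δ.1.2 : W ≃ₗ[ℂ] W).toLinearMap (fun n x => by
    have := (γ⁻¹ * δ).2.2 n x
    change (γ.1.2⁻¹ * δ.1.2) (η n x) =
      η (MulAut.conjNormal (γ.1.1⁻¹ * δ.1.1) n) ((γ.1.2⁻¹ * δ.1.2) x) at this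
    rw [h, inv_mul_cancel, map_one] at this
    exact this)
  refine ⟨c, ?_, ?_⟩
  · have := (γ⁻¹ * δ).2.1
    change LinearMap.det (γ.1.2⁻¹ * δ.1.2 : W ≃ₗ[ℂ] W).toLinearMap = 1 at this
    rw [hc, LinearMap.det_smul, LinearMap.det_id, mul_one] at this
    exact this
  · ext f w
    have := LinearMap.congr_fun hc (δ.1.2⁻¹ w)
    simp only [LinearMap.smul_apply, LinearMap.id_apply] at this
    change γ.1.2⁻¹ (δ.1.2 (δ.1.2⁻¹ w)) = _ at this
    have h2 : δ.1.2 (δ.1.2⁻¹ w) = w := LinearEquiv.apply_symm_apply _ _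
    rw [h2] at this
    change (liftRep ρ η γ f).1 w = c • (liftRep ρ η δ f).1 w
    rw [liftRep_apply, liftRep_apply, this, h, map_smul, map_smul]

/-- Every nonzero twisted intertwiner can be rescaled to have determinant `1`, so that it is part of
a lift. -/
theorem exists_lift [FiniteDimensional ℂ W] (hη : IsIrrRep η) (g : G) (A : W →ₗ[ℂ] W)
    (hA : ∀ (n : N) (w : W), A (η n w) = η (MulAut.conjNormal g n) (A w)) (h0 : A ≠ 0) :
    ∃ (γ : lifts η) (c : ℂ), c ≠ 0 ∧ γ.1.1 = g ∧ ∀ w, γ.1.2 w = c • A w := by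
  have hW := hη.1
  have hinj := hη.injective A _ hA h0
  let e := LinearEquiv.ofInjectiveEndo A hinj
  have he : ∀ w, e w = A w := fun w => rfl
  have hd : LinearMap.det A ≠ 0 := (LinearEquiv.isUnit_det' e).ne_zero
  obtain ⟨c, hc⟩ := IsAlgClosed.exists_pow_nat_eq (LinearMap.det A)⁻¹
    (finrank_pos (R := ℂ) (M := W))
  have hc0 : c ≠ 0 := by
    rintro rfl
    rw [zero_pow finrank_pos.ne'] at hc
    exact inv_ne_zero hd hc.symm
  let e' := e.trans (LinearEquiv.smulOfNeZero ℂ W c hc0)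
  have he' : ∀ w, e' w = c • A w := fun w => rfl
  have he'' : (e' : W →ₗ[ℂ] W) = c • A := by ext w; exact he' w
  refine ⟨⟨(g, e'), ?_, fun n w => ?_⟩, c, hc0, rfl, he'⟩
  · change LinearMap.det (e' : W →ₗ[ℂ] W) = 1
    rw [he'', LinearMap.det_smul, hc, inv_mul_cancel₀ hd]
  · change e' (η n w) = η (MulAut.conjNormal g n) (e' w)
    rw [he', he', hA, map_smul]

/-- Lifts act with finite order: the `|G|`-th power of a lift lies over `1`, so it acts as a
`dim W`-th root of unity. -/
theorem liftRep_pow [Fintype G] [FiniteDimensional ℂ W] (hη : IsIrrRep η) (γ : lifts η) :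
    liftRep ρ η γ ^ (Fintype.card G * finrank ℂ W) = 1 := by
  obtain ⟨c, hc, h⟩ := lifts_eq_smul (ρ := ρ) hη (γ ^ Fintype.card G) 1 (by
    change γ.1.1 ^ Fintype.card G = 1
    exact pow_card_eq_one)
  rw [map_pow, map_one] at h
  rw [pow_mul, h, smul_pow, hc, one_smul, one_pow]


/-! ### The trace-weighted sum over the group -/

open scoped Classical in
/-- The operator `tr(γ⁻¹) γ` on the multiplicity space, for a lift `γ` of `g`, and `0` if `g` has no
lift. By `twistSummand_eq` it does not depend on the lift: rescaling `γ` by `c` rescales the trace of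
`γ⁻¹` by `c⁻¹`. -/
def twistSummand (ρ : Representation ℂ G V) (η : Representation ℂ N W) (g : G) :
    End ℂ (homSpace ρ η) :=
  if h : ∃ γ : lifts η, γ.1.1 = g then
    LinearMap.trace ℂ _ (liftRep ρ η h.choose⁻¹) • liftRep ρ η h.choose
  else 0

theorem trace_smul_eq_of_eq_smul {γ δ : lifts η} {c : ℂ}
    (h : liftRep ρ η γ = c • liftRep ρ η δ) :
    LinearMap.trace ℂ _ (liftRep ρ η γ⁻¹) • liftRep ρ η γ =
      LinearMap.trace ℂ _ (liftRep ρ η δ⁻¹) • liftRep ρ η δ := by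
  have h1 : liftRep ρ η δ⁻¹ = c • liftRep ρ η γ⁻¹ := by
    have h2 : liftRep ρ η γ⁻¹ * liftRep ρ η γ = 1 := by
      rw [← map_mul, inv_mul_cancel, map_one]
    rw [h, mul_smul_comm] at h2
    have h3 : liftRep ρ η δ * liftRep ρ η δ⁻¹ = 1 := by
      rw [← map_mul, mul_inv_cancel, map_one]
    calc liftRep ρ η δ⁻¹ = (c • (liftRep ρ η γ⁻¹ * liftRep ρ η δ)) * liftRep ρ η δ⁻¹ := by
          rw [h2, one_mul]
      _ = _ := by rw [smul_mul_assoc, mul_assoc, h3, mul_one]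
  rw [h1, h, map_smul, smul_smul, smul_eq_mul, mul_comm]

theorem twistSummand_eq [FiniteDimensional ℂ W] (hη : IsIrrRep η) (γ : lifts η) :
    twistSummand ρ η γ.1.1 =
      LinearMap.trace ℂ _ (liftRep ρ η γ⁻¹) • liftRep ρ η γ := by
  have h : ∃ δ : lifts η, δ.1.1 = γ.1.1 := ⟨γ, rfl⟩
  rw [twistSummand, dif_pos h]
  obtain ⟨c, -, hc⟩ := lifts_eq_smul (ρ := ρ) hη h.choose γ h.choose_spec
  exact trace_smul_eq_of_eq_smul hc

theorem twistSummand_of_not {g : G} (h : ¬ ∃ γ : lifts η, γ.1.1 = g) :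
    twistSummand ρ η g = 0 := by rw [twistSummand, dif_neg h]

/-- `twistSummand` is invariant under right translation by an element having a lift that acts as a
scalar. -/
theorem twistSummand_mul [FiniteDimensional ℂ W] (hη : IsIrrRep η) (κ : lifts η) (c : ℂ)
    (hκ : liftRep ρ η κ = c • 1) (g : G) :
    twistSummand ρ η (g * κ.1.1) = twistSummand ρ η g := by
  by_cases h : ∃ γ : lifts η, γ.1.1 = g
  · obtain ⟨γ, rfl⟩ := h
    have : γ.1.1 * κ.1.1 = (γ * κ).1.1 := rfl
    rw [this, twistSummand_eq hη, twistSummand_eq hη]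
    exact trace_smul_eq_of_eq_smul (c := c) (by rw [map_mul, hκ, mul_smul_comm, mul_one])
  · rw [twistSummand_of_not h, twistSummand_of_not]
    rintro ⟨γ, hγ⟩
    refine h ⟨γ * κ⁻¹, ?_⟩
    change γ.1.1 * κ.1.1⁻¹ = g
    rw [hγ, mul_inv_cancel_right]

/-- Elements `n` of `N` have the lift `(n, c • η n)`, which acts as the scalar `c⁻¹`. -/
theorem twistSummand_mul_of_mem [FiniteDimensional ℂ W] (hη : IsIrrRep η) (g : G) (n : N) :
    twistSummand ρ η (g * n) = twistSummand ρ η g := by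
  have hW := hη.1
  obtain ⟨κ, c, hc, h1, h2⟩ := exists_lift hη (n : G) (η n) (fun m w => by
    rw [← rep_mul_apply, ← rep_mul_apply]
    congr 2
    ext; simp) (fun h => by
      obtain ⟨x, hx⟩ := exists_ne (0 : W)
      apply hx
      have := rep_mul_apply η n⁻¹ n x
      rw [h] at this
      simpa using this)
  rw [← h1]
  refine twistSummand_mul hη κ c⁻¹ ?_ g
  ext f w
  change (liftRep ρ η κ f).1 w = c⁻¹ • f.1 w
  rw [liftRep_apply, h1, ← f.2]
  have h3 := h2 (κ.1.2⁻¹ w)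
  have h4 : κ.1.2 (κ.1.2⁻¹ w) = w := LinearEquiv.apply_symm_apply _ _
  rw [h4] at h3
  conv_rhs => rw [h3, map_smul, smul_smul, inv_mul_cancel₀ hc, one_smul]

/-- Elements `k` of the kernel of `ρ` have the lift `(k, 1)`, which acts trivially. That `(k, 1)` is a
lift uses that `W` embeds in `V` through `f₀`. -/
theorem twistSummand_mul_of_ker [FiniteDimensional ℂ W] (hη : IsIrrRep η)
    (f₀ : homSpace ρ η) (h0 : f₀ ≠ 0) (g k : G) (hk : ρ k = 1) :
    twistSummand ρ η (g * k) = twistSummand ρ η g := by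
  have hinj := hη.injective f₀.1 (fun n => ρ n) f₀.2 (fun h => h0 (Subtype.ext h))
  have hk' : ρ k⁻¹ = 1 := by
    have : ρ (k⁻¹ * k) = ρ k⁻¹ := by rw [map_mul, hk, mul_one]
    rw [← this, inv_mul_cancel, map_one]
  let κ : lifts η := ⟨(k, 1), LinearMap.det_id, fun n w => by
    change η n w = η (MulAut.conjNormal k n) w
    apply hinj
    rw [f₀.2, f₀.2, MulAut.conjNormal_apply, map_mul, map_mul, hk, hk', one_mul, mul_one]⟩
  refine twistSummand_mul hη κ 1 ?_ g
  ext f w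
  change ρ k (f.1 w) = ((1 : ℂ) • f).1 w
  rw [hk, one_smul, Module.End.one_apply]

/-- The pairing of `Hom_N(V, W)` with `Hom_N(W, V)` given by the scalar `φ ∘ f`, defined as the
normalised trace of `φ ∘ f`. It is the scalar itself when `η` is irreducible (`comp_eq_pairing`). -/
def pairing (ρ : Representation ℂ G V) (η : Representation ℂ N W) :
    homSpace' ρ η →ₗ[ℂ] Dual ℂ (homSpace ρ η) :=
  LinearMap.mk₂ ℂ (fun φ f => (finrank ℂ W : ℂ)⁻¹ * LinearMap.trace ℂ W (φ.1 ∘ₗ f.1))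
    (fun a b f => by simp [LinearMap.add_comp, mul_add])
    (fun c a f => by simp [LinearMap.smul_comp, mul_left_comm])
    (fun a b f => by simp [LinearMap.comp_add, mul_add])
    (fun c a f => by simp [LinearMap.comp_smul, mul_left_comm])

theorem pairing_apply (φ : homSpace' ρ η) (f : homSpace ρ η) :
    pairing ρ η φ f = (finrank ℂ W : ℂ)⁻¹ * LinearMap.trace ℂ W (φ.1 ∘ₗ f.1) := rfl

theorem comp_eq_pairing [FiniteDimensional ℂ W] (hη : IsIrrRep η) (φ : homSpace' ρ η)
    (f : homSpace ρ η) : φ.1 ∘ₗ f.1 = pairing ρ η φ f • LinearMap.id := by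
  have hW := hη.1
  obtain ⟨c, hc⟩ := hη.exists_scalar (φ.1 ∘ₗ f.1) (fun n w => by
    simp only [LinearMap.comp_apply]; rw [f.2, φ.2])
  rw [pairing_apply, hc, map_smul, LinearMap.trace_id, smul_eq_mul, mul_comm c,
    inv_mul_cancel_left₀]
  exact_mod_cast (finrank_pos (R := ℂ) (M := W)).ne'

/-- Every linear form on `Hom_N(W, V)` comes from `Hom_N(V, W)`: no nonzero `f` is annihilated by all
of `Hom_N(V, W)`, because averaging a linear left inverse of `f` over `N` gives `φ` with
`φ ∘ f = |N|`. -/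
theorem pairing_surjective [Fintype G] [FiniteDimensional ℂ V] [FiniteDimensional ℂ W]
    (hη : IsIrrRep η) : Function.Surjective (pairing ρ η) := by
  have hW := hη.1
  rw [← LinearMap.range_eq_top, ← Subspace.dualCoannihilator_dualAnnihilator_eq
    (W := LinearMap.range (pairing ρ η))]
  rw [← Submodule.dualAnnihilator_bot]
  congr 1
  rw [Submodule.eq_bot_iff]
  intro f hf
  by_contra h0
  rw [Submodule.mem_dualCoannihilator] at hf
  have hinj := hη.injective f.1 (fun n => ρ n) f.2 (fun h => h0 (Subtype.ext h))
  obtain ⟨π, hπ⟩ := LinearMap.exists_leftInverse_of_injective f.1 (LinearMap.ker_eq_bot.2 hinj)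
  have : Fintype N := Fintype.ofFinite N
  let φ : homSpace' ρ η := ⟨average (ρ.comp N.subtype) η π, fun n v =>
    average_equivariant (ρ.comp N.subtype) η π n v⟩
  have h1 : φ.1 ∘ₗ f.1 = (Fintype.card N : ℂ) • LinearMap.id := by
    ext w
    change average (ρ.comp N.subtype) η π (f.1 w) = _
    simp only [average, LinearMap.sum_apply, LinearMap.comp_apply, LinearMap.smul_apply,
      LinearMap.id_apply, MonoidHom.comp_apply, Subgroup.subtype_apply]
    rw [Finset.sum_congr rfl (g := fun _ => w)]
    · simp [Nat.cast_smul_eq_nsmul]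
    · intro n _
      rw [← f.2]
      have := LinearMap.congr_fun hπ (η n⁻¹ w)
      simp only [LinearMap.comp_apply, LinearMap.id_apply] at this
      rw [this, ← rep_mul_apply, mul_inv_cancel, map_one, Module.End.one_apply]
  have h2 := hf _ ⟨φ, rfl⟩
  rw [pairing_apply, h1, map_smul, LinearMap.trace_id] at h2
  have hW' : (finrank ℂ W : ℂ) ≠ 0 := by exact_mod_cast (finrank_pos (R := ℂ) (M := W)).ne'
  simp [hW'] at h2

/-- The summand at `g` of the average of `f ∘ φ` over `G`, expressed through a lift of `g`. -/
theorem twist_term [FiniteDimensional ℂ W] (hη : IsIrrRep η) (γ : lifts η) (φ : homSpace' ρ η)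
    (f f' : homSpace ρ η) (w : W) :
    ρ γ.1.1 (f.1 (φ.1 (ρ γ.1.1⁻¹ (f'.1 w)))) =
      pairing ρ η φ (liftRep ρ η γ⁻¹ f') • (liftRep ρ η γ f).1 w := by
  have h := LinearMap.congr_fun (comp_eq_pairing hη φ (liftRep ρ η γ⁻¹ f')) (γ.1.2⁻¹ w)
  have h4 : γ.1.2 (γ.1.2⁻¹ w) = w := LinearEquiv.apply_symm_apply _ _
  have h5 : (liftRep ρ η γ⁻¹ f').1 (γ.1.2⁻¹ w) = ρ γ.1.1⁻¹ (f'.1 w) := by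
    rw [liftRep_apply]
    change ρ γ.1.1⁻¹ (f'.1 (γ.1.2 (γ.1.2⁻¹ w))) = _
    rw [h4]
  rw [LinearMap.comp_apply, h5] at h
  rw [h, LinearMap.smul_apply, LinearMap.id_apply, map_smul, map_smul, liftRep_apply]

/-- If `g` has no lift, then the twisted intertwiner `φ ∘ ρ g⁻¹ ∘ f'` vanishes. -/
theorem twist_term_of_not [FiniteDimensional ℂ W] (hη : IsIrrRep η) {g : G}
    (hg : ¬ ∃ γ : lifts η, γ.1.1 = g) (φ : homSpace' ρ η) (f' : homSpace ρ η) (w : W) :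
    φ.1 (ρ g⁻¹ (f'.1 w)) = 0 := by
  by_contra h
  obtain ⟨γ, c, -, h1, -⟩ := exists_lift hη g⁻¹ (φ.1 ∘ₗ ρ g⁻¹ ∘ₗ f'.1) (fun n x => by
    simp only [LinearMap.comp_apply]
    rw [f'.2, ← φ.2, ← rep_mul_apply, ← rep_mul_apply]
    simp [mul_assoc]) (fun h' => h (LinearMap.congr_fun h' w))
  refine hg ⟨γ⁻¹, ?_⟩
  change γ.1.1⁻¹ = g
  rw [h1, inv_inv]

/-- Averaging `f ∘ φ` over `G` gives a scalar by Schur's lemma, and the trace determines it. -/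
theorem sum_conj [Fintype G] [FiniteDimensional ℂ V] [FiniteDimensional ℂ W] (hρ : IsIrrRep ρ)
    (hη : IsIrrRep η) (φ : homSpace' ρ η) (f : homSpace ρ η) (v : V) :
    ∑ g : G, ρ g (f.1 (φ.1 (ρ g⁻¹ v))) =
      ((Fintype.card G : ℂ) * finrank ℂ W / finrank ℂ V * pairing ρ η φ f) • v := by
  have hV := hρ.1
  have hW := hη.1
  have hV' : (finrank ℂ V : ℂ) ≠ 0 := by exact_mod_cast (finrank_pos (R := ℂ) (M := V)).ne'
  have hW' : (finrank ℂ W : ℂ) ≠ 0 := by exact_mod_cast (finrank_pos (R := ℂ) (M := W)).ne'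
  obtain ⟨c, hc⟩ := hρ.exists_scalar (average ρ ρ (f.1 ∘ₗ φ.1)) (average_equivariant ρ ρ _)
  have h1 := LinearMap.congr_fun hc v
  simp only [average, LinearMap.sum_apply, LinearMap.comp_apply, LinearMap.smul_apply,
    LinearMap.id_apply] at h1
  rw [h1]
  congr 1
  have h2 := congrArg (LinearMap.trace ℂ V) hc
  rw [map_smul, LinearMap.trace_id, average, map_sum,
    Finset.sum_congr rfl (g := fun _ => LinearMap.trace ℂ V (f.1 ∘ₗ φ.1))] at h2
  · rw [pairing_apply, LinearMap.trace_comp_comm' f.1 φ.1]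
    simp only [Finset.sum_const, Finset.card_univ, nsmul_eq_mul, smul_eq_mul] at h2
    field_simp
    exact h2.symm
  · intro g _
    rw [LinearMap.trace_comp_comm', LinearMap.comp_assoc]
    change LinearMap.trace ℂ V ((f.1 ∘ₗ φ.1) ∘ₗ (ρ g⁻¹ * ρ g)) = _
    rw [← map_mul, inv_mul_cancel, map_one]
    rfl

/-- The operators `twistSummand` add up to the scalar `|G| dim W / dim V`. Expanding each trace
through a basis `b` of the multiplicity space, with the dual forms realised by maps `φ j` in
`Hom_N(V, W)`, the sum becomes `∑ j` of the averages of `f ∘ φ j` over `G` applied to `b j`. -/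
theorem sum_twistSummand [Fintype G] [FiniteDimensional ℂ V] [FiniteDimensional ℂ W]
    (hρ : IsIrrRep ρ) (hη : IsIrrRep η) (f : homSpace ρ η) :
    ∑ g : G, twistSummand ρ η g f =
      ((Fintype.card G : ℂ) * finrank ℂ W / finrank ℂ V) • f := by
  let b := finBasis ℂ (homSpace ρ η)
  choose φ hφ using fun j => pairing_surjective (ρ := ρ) hη (b.coord j)
  have key : ∀ (g : G) (w : W), (twistSummand ρ η g f).1 w =
      ∑ j, ρ g (f.1 ((φ j).1 (ρ g⁻¹ ((b j).1 w)))) := by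
    intro g w
    by_cases h : ∃ γ : lifts η, γ.1.1 = g
    · obtain ⟨γ, rfl⟩ := h
      rw [twistSummand_eq hη]
      simp only [twist_term hη, hφ]
      rw [← Finset.sum_smul, LinearMap.trace_eq_matrix_trace ℂ b, Matrix.trace]
      simp [LinearMap.toMatrix_apply]
    · simp only [twist_term_of_not hη h, twistSummand_of_not h]
      simp
  ext w
  rw [Submodule.coe_sum, LinearMap.sum_apply, Finset.sum_congr rfl fun g _ => key g w,
    Finset.sum_comm]
  simp only [sum_conj hρ hη, hφ, mul_smul]
  rw [← Finset.smul_sum]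
  have hf := congrArg (fun f : homSpace ρ η => f.1 w) (b.sum_repr f)
  simp only [Submodule.coe_sum, LinearMap.sum_apply] at hf
  change _ = ((Fintype.card G : ℂ) * finrank ℂ W / finrank ℂ V) • f.1 w
  rw [← hf]
  rfl

/-! ### Integrality and divisibility -/

theorem sum_eq_card_smul_sum_quotient {A : Type*} [AddCommGroup A] [Module ℂ A] [Fintype G]
    (H : Subgroup G) (F : G → A) (hF : ∀ h ∈ H, ∀ g, F (g * h) = F g) :
    ∑ g, F g = (Nat.card H : ℂ) • ∑ q : G ⧸ H, F q.out := by
  have hmk : ∀ (q : G ⧸ H) (h : H), ((q.out * h : G) : G ⧸ H) = q := fun q h => by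
    rw [QuotientGroup.mk_mul_of_mem _ h.2, QuotientGroup.out_eq']
  have hbij : Function.Bijective (fun p : (G ⧸ H) × H => p.1.out * (p.2 : G)) := by
    constructor
    · rintro ⟨q, h⟩ ⟨q', h'⟩ he
      have hq : q = q' := by rw [← hmk q h, ← hmk q' h']; exact congrArg _ he
      subst hq
      have hh : h = h' := Subtype.ext (mul_left_cancel he)
      rw [hh]
    · intro g
      refine ⟨((g : G ⧸ H), ⟨(g : G ⧸ H).out⁻¹ * g, ?_⟩), mul_inv_cancel_left _ _⟩
      rw [← QuotientGroup.eq, QuotientGroup.out_eq']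
  rw [← hbij.sum_comp F, Fintype.sum_prod_type, Finset.smul_sum]
  refine Finset.sum_congr rfl fun q _ => ?_
  rw [Finset.sum_congr rfl (g := fun _ => F q.out)]
  · simp [Nat.cast_smul_eq_nsmul]
  · intro h _
    exact hF h h.2 q.out

/-- The scalar `|G| dim W / (|N · ker ρ| dim V)` is an algebraic integer. By `sum_twistSummand` and
invariance modulo `N ⊔ ker ρ` it is the sum of `tr(γ⁻¹) γ` over the cosets of that subgroup, and this
operator preserves the nonzero module spanned over the algebraic integers by the translates of `f₀`,
which is finitely generated. -/
theorem isIntegral_ratio [Fintype G] [FiniteDimensional ℂ V] [FiniteDimensional ℂ W]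
    (hρ : IsIrrRep ρ) (hη : IsIrrRep η) (f₀ : homSpace ρ η) (h0 : f₀ ≠ 0)
    (H : Subgroup G) (hH : H = N ⊔ MonoidHom.ker ρ) :
    IsIntegral ℤ ((Fintype.card G : ℂ) * finrank ℂ W / (Nat.card H * finrank ℂ V)) := by
  have hW := hη.1
  let Z := integralClosure ℤ ℂ
  let v : G → homSpace ρ η := fun g =>
    if h : ∃ γ : lifts η, γ.1.1 = g then liftRep ρ η h.choose f₀ else 0
  let M : Submodule Z (homSpace ρ η) := Submodule.span Z (Set.range v)
  have hMfg : M.FG := Submodule.fg_span (Set.finite_range v)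
  -- Other lifts of the same element only contribute root-of-unity multiples of the generators.
  have hM1 : ∀ γ : lifts η, liftRep ρ η γ f₀ ∈ M := fun γ => by
    have h : ∃ δ : lifts η, δ.1.1 = γ.1.1 := ⟨γ, rfl⟩
    obtain ⟨c, hc, hcc⟩ := lifts_eq_smul (ρ := ρ) hη γ h.choose h.choose_spec.symm
    have hcZ : IsIntegral ℤ c := IsIntegral.of_pow finrank_pos (by rw [hc]; exact isIntegral_one)
    have h2 : v γ.1.1 ∈ M := Submodule.subset_span ⟨_, rfl⟩
    have h3 := M.smul_mem (⟨c, hcZ⟩ : Z) h2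
    have h4 : v γ.1.1 = liftRep ρ η h.choose f₀ := dif_pos h
    rw [hcc, LinearMap.smul_apply, ← h4]
    exact h3
  have hM2 : ∀ γ : lifts η, ∀ f ∈ M, liftRep ρ η γ f ∈ M := fun γ f hf => by
    induction hf using Submodule.span_induction with
    | mem x hx =>
      obtain ⟨g, rfl⟩ := hx
      by_cases h : ∃ δ : lifts η, δ.1.1 = g
      · have h4 : v g = liftRep ρ η h.choose f₀ := dif_pos h
        rw [h4, ← rep_mul_apply]
        exact hM1 _
      · have h4 : v g = 0 := dif_neg h
        rw [h4, map_zero]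
        exact M.zero_mem
    | zero => rw [map_zero]; exact M.zero_mem
    | add x y _ _ hx hy => rw [map_add]; exact M.add_mem hx hy
    | smul a x _ hx =>
      have : liftRep ρ η γ (a • x) = a • liftRep ρ η γ x := (liftRep ρ η γ).map_smul (a : ℂ) x
      rw [this]
      exact M.smul_mem a hx
  have hM3 : ∀ g, ∀ f ∈ M, twistSummand ρ η g f ∈ M := fun g f hf => by
    by_cases h : ∃ δ : lifts η, δ.1.1 = g
    · obtain ⟨γ, rfl⟩ := h
      rw [twistSummand_eq hη]
      have hi : IsIntegral ℤ (LinearMap.trace ℂ _ (liftRep ρ η γ⁻¹)) :=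
        isIntegral_trace_of_pow_eq_one_s9 _ (Nat.mul_pos Fintype.card_pos finrank_pos)
          (liftRep_pow hη γ⁻¹)
      exact M.smul_mem (⟨_, hi⟩ : Z) (hM2 γ f hf)
    · rw [twistSummand_of_not h]
      exact M.zero_mem
  have hHF : ∀ h ∈ H, ∀ g, twistSummand ρ η (g * h) = twistSummand ρ η g := by
    let S : Subgroup G :=
      { carrier := {h | ∀ g, twistSummand ρ η (g * h) = twistSummand ρ η g}
        mul_mem' := fun {a b} ha hb g => by rw [← mul_assoc, hb, ha]
        one_mem' := fun g => by rw [mul_one]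
        inv_mem' := fun {a} ha g => by
          rw [← ha (g * a⁻¹), inv_mul_cancel_right] }
    have hle : H ≤ S := by
      rw [hH]
      exact sup_le (fun n hn g => twistSummand_mul_of_mem hη g ⟨n, hn⟩)
        (fun k hk g => twistSummand_mul_of_ker hη f₀ h0 g k hk)
    exact fun h hh => hle hh
  have hsum := sum_eq_card_smul_sum_quotient H (twistSummand ρ η) hHF
  have hHc : (Nat.card H : ℂ) ≠ 0 := by exact_mod_cast Nat.card_pos.ne'
  refine isIntegral_trans (A := Z) _ (isIntegral_of_smul_mem_submodule M ?_ hMfg _ ?_)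
  · rw [Submodule.ne_bot_iff]
    refine ⟨f₀, ?_, h0⟩
    have := hM1 1
    rwa [map_one, Module.End.one_apply] at this
  · intro f hf
    have h1 := sum_twistSummand hρ hη f
    rw [← LinearMap.sum_apply, hsum, LinearMap.smul_apply, LinearMap.sum_apply] at h1
    have h2 : ((Fintype.card G : ℂ) * finrank ℂ W / (Nat.card H * finrank ℂ V)) • f =
        ∑ q : G ⧸ H, twistSummand ρ η q.out f := by
      rw [(eq_inv_smul_iff₀ hHc).2 h1, smul_smul]
      congr 1
      field_simp
    rw [h2]
    exact M.sum_mem fun q _ => hM3 _ f hf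

/-- The scalar of `isIntegral_ratio` is rational, hence an integer. With `N = ⊥` and `W`
one-dimensional and trivial this says that `|ker ρ| dim V` divides `|G|`. -/
theorem card_mul_finrank_dvd [Fintype G] [FiniteDimensional ℂ V] [FiniteDimensional ℂ W]
    (hρ : IsIrrRep ρ) (hη : IsIrrRep η) (f₀ : homSpace ρ η) (h0 : f₀ ≠ 0) :
    Nat.card (N ⊔ MonoidHom.ker ρ : Subgroup G) * finrank ℂ V ∣ Nat.card G * finrank ℂ W := by
  have hV := hρ.1
  have h := isIntegral_ratio hρ hη f₀ h0 _ rfl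
  set H := N ⊔ MonoidHom.ker ρ
  have hpos : Nat.card H * finrank ℂ V ≠ 0 := (Nat.mul_pos Nat.card_pos finrank_pos).ne'
  have h2 : IsIntegral ℤ (((Nat.card G * finrank ℂ W : ℕ) : ℚ) /
      ((Nat.card H * finrank ℂ V : ℕ) : ℚ)) := by
    rw [← isIntegral_algebraMap_iff (B := ℂ) (algebraMap ℚ ℂ).injective]
    simpa [Nat.card_eq_fintype_card] using h
  obtain ⟨z, hz⟩ := IsIntegrallyClosed.isIntegral_iff.1 h2
  rw [eq_div_iff (by exact_mod_cast hpos)] at hz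
  rw [← Int.natCast_dvd_natCast]
  refine ⟨z, ?_⟩
  have hz' : z * ((Nat.card H * finrank ℂ V : ℕ) : ℤ) = ((Nat.card G * finrank ℂ W : ℕ) : ℤ) := by
    rw [eq_intCast] at hz
    exact_mod_cast hz
  rw [← hz', mul_comm]

end Multiplicity

/-! ### Characters -/

/-- Codegrees are integers: the case `N = ⊥` of `card_mul_finrank_dvd`. -/
theorem card_ker_mul_finrank_dvd {G V : Type} [Group G] [Fintype G] [AddCommGroup V] [Module ℂ V]
    [FiniteDimensional ℂ V] (ρ : Representation ℂ G V) (hρ : IsIrrRep ρ) :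
    Nat.card (MonoidHom.ker ρ) * finrank ℂ V ∣ Nat.card G := by
  have hV := hρ.1
  let η : Representation ℂ (⊥ : Subgroup G) ℂ := 1
  have hη : IsIrrRep η := ⟨inferInstance, fun p _ => eq_bot_or_eq_top p⟩
  obtain ⟨v, hv⟩ := exists_ne (0 : V)
  let f₀ : homSpace ρ η := ⟨LinearMap.toSpanSingleton ℂ V v, fun n w => by
    obtain rfl := Subsingleton.elim n 1
    simp⟩
  have h := card_mul_finrank_dvd hρ hη f₀ (fun h => hv (by
    have := congrArg (fun f : homSpace ρ η => f.1 1) h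
    simpa [f₀] using this))
  rwa [bot_sup_eq, finrank_self, mul_one] at h

/-- A nonzero inner product of characters on `N` yields a nonzero intertwiner. -/
theorem exists_ne_zero_homSpace {G V W : Type} [Group G] [Fintype G] [AddCommGroup V] [Module ℂ V]
    [FiniteDimensional ℂ V] [AddCommGroup W] [Module ℂ W] [FiniteDimensional ℂ W]
    {N : Subgroup G} (ρ : Representation ℂ G V) (η : Representation ℂ N W)
    (h : ∑ n : N, LinearMap.trace ℂ V (ρ n) * starRingEnd ℂ (LinearMap.trace ℂ W (η n)) ≠ 0) :
    ∃ f : homSpace ρ η, f ≠ 0 := by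
  have hN : (Nat.card N : ℂ) ≠ 0 := by exact_mod_cast Nat.card_pos.ne'
  let _ := invertibleOfNonzero hN
  have h1 := Representation.card_inv_mul_sum_char_mul_char_eq_finrank η (ρ.comp N.subtype)
  have h2 : ∑ n : N, Representation.character (ρ.comp N.subtype) n * η.character n⁻¹ ≠ 0 := by
    refine fun h0 => h (h0 ▸ Finset.sum_congr rfl fun n _ => ?_)
    have := trace_conj_of_pow_eq_one (η n) (η n⁻¹) (k := Fintype.card N) Fintype.card_pos
      (by rw [← map_pow, pow_card_eq_one, map_one])
      (by rw [← map_mul, inv_mul_cancel, map_one])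
    rw [← this]
    rfl
  have h3 : finrank ℂ (Representation.IntertwiningMap η (ρ.comp N.subtype)) ≠ 0 := fun h0 => by
    rw [h0] at h1
    simp only [Nat.cast_zero, mul_eq_zero, inv_eq_zero] at h1
    exact h1.elim hN h2
  by_contra! hall
  refine h3 ?_
  have : Subsingleton (Representation.IntertwiningMap η (ρ.comp N.subtype)) :=
    subsingleton_of_forall_eq 0 fun f => by
      have h5 := hall ⟨f.toLinearMap, fun n w => LinearMap.congr_fun (f.isIntertwining' n) w⟩
      ext w
      have := congrArg (fun f : homSpace ρ η => f.1 w) h5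
      simpa using this
  exact finrank_zero_of_subsingleton

theorem charDeg_character_s9 {G : Type} [Group G] (V : FDRep ℂ G) :
    charDeg V.character = finrank ℂ V := by
  rw [charDeg, FDRep.char_one, Complex.natCast_re, Nat.floor_natCast]

theorem card_charKer_character {G : Type} [Group G] [Fintype G] (V : FDRep ℂ G) :
    Nat.card (charKer V.character) = Nat.card (MonoidHom.ker V.ρ) := by
  have : charKer V.character = (MonoidHom.ker V.ρ : Set G) := by
    ext g
    change V.character g = V.character 1 ↔ V.ρ g = 1
    constructor
    · intro h
      rw [FDRep.char_one] at h
      exact eq_one_of_trace_eq_s9 (V.ρ g) (k := Fintype.card G) Fintype.card_pos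
        (by rw [← map_pow, pow_card_eq_one, map_one]) h
    · intro h
      rw [FDRep.character, FDRep.character, h, map_one V.ρ]
  rw [this]
  rfl

theorem card_mul_card_inf {G : Type} [Group G] [Fintype G] (N K : Subgroup G) [N.Normal] :
    Nat.card (N ⊔ K : Subgroup G) * Nat.card (N ⊓ K : Subgroup G) = Nat.card N * Nat.card K := by
  have h1 := Subgroup.relIndex_mul_relIndex ⊥ N (N ⊔ K) bot_le le_sup_left
  have h2 := Subgroup.relIndex_mul_relIndex ⊥ (N ⊓ K) K bot_le inf_le_right
  rw [Subgroup.relIndex_bot_left, Subgroup.relIndex_bot_left] at h1 h2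
  rw [Subgroup.inf_relIndex_right] at h2
  rw [Subgroup.relIndex_sup_left] at h1
  rw [← h1, ← h2]
  ring

/-- **Lemma 2.1(ii).** If `N ⊴ G`, `θ ∈ Irr(N)` and `χ ∈ Irr(G)` lies over `θ`, then
`cod(θ)` divides `cod(χ)`. -/
theorem cod_dvd_of_liesOver (G : Type) [Group G] [Fintype G] (N : Subgroup G) [N.Normal]
    (θ : N → ℂ) (hθ : IsIrrChar N θ) (χ : G → ℂ) (hχ : IsIrrChar G χ)
    (hover : (∑ n : N, χ n * starRingEnd ℂ (θ n)) ≠ 0) :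
    cod θ ∣ cod χ := by
  obtain ⟨V, hV, rfl⟩ := hχ
  obtain ⟨W, hW, rfl⟩ := hθ
  let ρ : Representation ℂ G V := V.ρ
  let η : Representation ℂ N W := W.ρ
  have hρ : IsIrrRep ρ := isIrrRep_of_simple V hV
  have hη : IsIrrRep η := isIrrRep_of_simple W hW
  have hVn := hρ.1
  have hWn := hη.1
  obtain ⟨f₀, h0⟩ := exists_ne_zero_homSpace ρ η hover
  have hinj := hη.injective f₀.1 (fun n => ρ n) f₀.2 (fun h => h0 (Subtype.ext h))
  obtain ⟨a, ha⟩ := card_ker_mul_finrank_dvd ρ hρ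
  obtain ⟨b, hb⟩ := card_ker_mul_finrank_dvd η hη
  obtain ⟨c, hc⟩ := card_mul_finrank_dvd hρ hη f₀ h0
  have hI := card_mul_card_inf N (MonoidHom.ker ρ)
  have hL : Nat.card (N ⊓ MonoidHom.ker ρ : Subgroup G) ∣ Nat.card (MonoidHom.ker η) := by
    have hle : (N ⊓ MonoidHom.ker ρ : Subgroup G) ≤ (MonoidHom.ker η).map N.subtype := by
      rintro n ⟨hn, hk⟩
      refine ⟨⟨n, hn⟩, ?_, rfl⟩
      change η ⟨n, hn⟩ = 1
      ext w
      apply hinj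
      rw [f₀.2]
      change ρ n (f₀.1 w) = f₀.1 w
      rw [show ρ n = 1 from hk, Module.End.one_apply]
    have := Subgroup.card_dvd_of_le hle
    rwa [Subgroup.card_map_of_injective N.subtype_injective] at this
  obtain ⟨l, hl⟩ := hL
  have pK : 0 < Nat.card (MonoidHom.ker ρ) := Nat.card_pos
  have pL : 0 < Nat.card (MonoidHom.ker η) := Nat.card_pos
  have pI : 0 < Nat.card (N ⊓ MonoidHom.ker ρ : Subgroup G) := Nat.card_pos
  have pV : 0 < finrank ℂ V := finrank_pos
  have pW : 0 < finrank ℂ W := finrank_pos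
  have hcodχ : cod V.character = a := by
    rw [cod, charDeg_character_s9, card_charKer_character]
    exact Nat.div_eq_of_eq_mul_right (Nat.mul_pos pK pV) ha
  have hcodθ : cod W.character = b := by
    rw [cod, charDeg_character_s9, card_charKer_character]
    exact Nat.div_eq_of_eq_mul_right (Nat.mul_pos pL pW) hb
  rw [hcodχ, hcodθ]
  -- `a`, `b`, `c`, `l` are the quotients in the four divisibilities; together with
  -- `|N ⊔ ker ρ| |N ⊓ ker ρ| = |N| |ker ρ|` they satisfy `a = b * (l * c)`.
  refine ⟨l * c, ?_⟩
  rw [ha] at hc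
  rw [hb] at hI
  generalize Nat.card (MonoidHom.ker ρ) = K at *
  generalize Nat.card (MonoidHom.ker η) = L at *
  generalize Nat.card (N ⊓ MonoidHom.ker ρ : Subgroup G) = I at *
  generalize Nat.card (N ⊔ MonoidHom.ker ρ : Subgroup G) = H at *
  generalize finrank ℂ V = x at *
  generalize finrank ℂ W = y at *
  apply Nat.eq_of_mul_eq_mul_left (Nat.mul_pos (Nat.mul_pos pK pV) (Nat.mul_pos pW pI))
  calc K * x * (y * I) * a = (K * x * a * y) * I := by ring
    _ = (H * I) * x * c := by rw [hc]; ring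
    _ = _ := by rw [hI, hl]; ring
end Codegree
end
end
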